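/- Let x be a vertex of degree 3 in a nonplanar graph G. Suppose G has no k-separation {G1, G2} with k ≤ 2 such that some Gi contains x together with all three of its neighbors. Then G has a subgraph G' that is a subdivision of K_{3,3} in which x has degree 3 (i.e., x is a branch vertex of the subdivision). -/

import Mathlib

open SimpleGraph

/-- `H` is a minor of `G` (branch-set / model definition). -/
def IsMinor {W V : Type*} (H : SimpleGraph W) (G : SimpleGraph V) : Prop :=
  ∃ B : W → Set V,
    (∀ w, (B w).Nonempty) ∧
    (∀ w, (G.induce (B w)).Connected) ∧
    (Pairwise fun w₁ w₂ => Disjoint (B w₁) (B w₂)) ∧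
    (∀ ⦃w₁ w₂ : W⦄, H.Adj w₁ w₂ → ∃ v₁ ∈ B w₁, ∃ v₂ ∈ B w₂, G.Adj v₁ v₂)

def K5 : SimpleGraph (Fin 5) := ⊤

def K33 : SimpleGraph (Fin 3 ⊕ Fin 3) := completeBipartiteGraph (Fin 3) (Fin 3)

/-- A graph is planar iff it has neither a `K₅` nor a `K₃,₃` minor (Wagner's theorem). -/
def Planar {V : Type*} (G : SimpleGraph V) : Prop := ¬ IsMinor K5 G ∧ ¬ IsMinor K33 G

/-- `G / uw`: contract the edge `uw`, merging `w` into `u` (the vertex `w` becomes isolated). -/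
def contractEdge {V : Type*} (G : SimpleGraph V) (u w : V) : SimpleGraph V :=
  SimpleGraph.fromRel fun a b =>
    a ≠ w ∧ b ≠ w ∧ (G.Adj a b ∨ (a = u ∧ G.Adj w b) ∨ (b = u ∧ G.Adj a w))

/-- A nonplanar graph is almost-planar if for every edge, deletion or contraction is planar. -/
def AlmostPlanar {V : Type*} (G : SimpleGraph V) : Prop :=
  ¬ Planar G ∧ ∀ ⦃u v : V⦄, G.Adj u v →
    (Planar (G.deleteEdges {s(u, v)}) ∨ Planar (contractEdge G u v))

/-- `G` is `k`-connected: more than `k` vertices and deleting fewer than `k` vertices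
leaves a connected graph. -/
def KConnected {V : Type*} (G : SimpleGraph V) (k : ℕ) : Prop :=
  k < Nat.card V ∧ ∀ s : Set V, s.ncard < k → (G.induce (sᶜ)).Connected

/-- `{G[A], G[B]}` is a `k`-separation of `G`. -/
def IsSep {V : Type*} (G : SimpleGraph V) (k : ℕ) (A B : Set V) : Prop :=
  A ∪ B = Set.univ ∧ A ≠ Set.univ ∧ B ≠ Set.univ ∧ (A ∩ B).ncard = k ∧
  ∀ ⦃x y : V⦄, G.Adj x y → (x ∈ A ∧ y ∈ A) ∨ (x ∈ B ∧ y ∈ B)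

/-- The star `K_{1,3}`, with centre `0`. -/
def K13 : SimpleGraph (Fin 4) := SimpleGraph.fromRel fun a _ => a = 0

def InternallyFourConnected {V : Type*} (G : SimpleGraph V) : Prop :=
  KConnected G 3 ∧ 5 ≤ Nat.card V ∧
  ∀ A B : Set V, IsSep G 3 A B →
    Xor' (Nonempty (G.induce A ≃g K13)) (Nonempty (G.induce B ≃g K13))

/-- The wheel `W_n`: a cycle of length `n` plus a hub (`none`) joined to all of it. -/
def wheelGraph (n : ℕ) : SimpleGraph (Option (Fin n)) :=
  SimpleGraph.fromRel fun a b =>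
    match a, b with
    | some i, some j => j.val = (i.val + 1) % n
    | none, some _ => True
    | _, _ => False

def IsWheel {V : Type*} (G : SimpleGraph V) : Prop :=
  ∃ n, 3 ≤ n ∧ Nonempty (G ≃g wheelGraph n)

/-- The double wheel `DW_n`: a cycle of length `n` plus two adjacent hubs joined to all of it. -/
def doubleWheel (n : ℕ) : SimpleGraph (Fin n ⊕ Fin 2) :=
  SimpleGraph.fromRel fun a b =>
    match a, b with
    | .inl i, .inl j => j.val = (i.val + 1) % n
    | .inl _, .inr _ => True
    | .inr _, .inr _ => True
    | _, _ => False

/-- The Möbius ladder `M_n`: a cycle of length `2n` plus all "opposite" chords. -/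
def mobiusLadder (n : ℕ) : SimpleGraph (Fin (2 * n)) :=
  SimpleGraph.fromRel fun i j =>
    j.val = (i.val + 1) % (2 * n) ∨ j.val = (i.val + n) % (2 * n)

/-- `C²_m`: a cycle of length `m` plus all chords between vertices at distance two. -/
def squareCycle (m : ℕ) : SimpleGraph (Fin m) :=
  SimpleGraph.fromRel fun i j =>
    j.val = (i.val + 1) % m ∨ j.val = (i.val + 2) % m

/-- The alternating double wheel `AW_{2n}`: a cycle of length `2n` plus two adjacent hubs,
each joined to alternating cycle vertices. -/
def altDoubleWheel (n : ℕ) : SimpleGraph (Fin (2 * n) ⊕ Fin 2) :=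
  SimpleGraph.fromRel fun a b =>
    match a, b with
    | .inl i, .inl j => j.val = (i.val + 1) % (2 * n)
    | .inl i, .inr k => i.val % 2 = k.val
    | .inr _, .inr _ => True
    | _, _ => False

/-- The class `𝒲`: three wheels glued along a common triangle `V₀`, with no other edges. -/
def InClassW {V : Type*} (G : SimpleGraph V) : Prop :=
  ∃ P : V → Fin 4,
    (P ⁻¹' {0}).ncard = 3 ∧
    (∀ x y : V, P x = 0 → P y = 0 → x ≠ y → G.Adj x y) ∧
    (∀ i : Fin 4, i ≠ 0 → IsWheel (G.induce {v | P v = 0 ∨ P v = i})) ∧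
    (∀ ⦃x y : V⦄, G.Adj x y → ∃ i : Fin 4, i ≠ 0 ∧ (P x = 0 ∨ P x = i) ∧ (P y = 0 ∨ P y = i))

/-- `EX₁`: `K₃,₃` plus a vertex joined to all of one colour class. -/
def EX1 : SimpleGraph (Option (Fin 3 ⊕ Fin 3)) :=
  SimpleGraph.fromRel fun a b =>
    match a, b with
    | some (.inl _), some (.inr _) => True
    | none, some (.inl _) => True
    | _, _ => False

/-- `EX₂`: `K₅` plus a vertex joined to three of its vertices. -/
def EX2 : SimpleGraph (Option (Fin 5)) :=
  SimpleGraph.fromRel fun a b =>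
    match a, b with
    | some i, some j => i ≠ j
    | none, some j => j.val < 3
    | _, _ => False

/-- `EX₈`: `K₃,₃` plus a vertex joined to two vertices of one class and one of the other. -/
def EX8 : SimpleGraph (Option (Fin 3 ⊕ Fin 3)) :=
  SimpleGraph.fromRel fun a b =>
    match a, b with
    | some (.inl _), some (.inr _) => True
    | none, some x => x = Sum.inl 0 ∨ x = Sum.inl 1 ∨ x = Sum.inr 0
    | _, _ => False

/-- `K₅ʰ`: subdivide the edges `01` and `02` of `K₅` and join the two subdivision vertices. -/
def K5h : SimpleGraph (Fin 5 ⊕ Fin 2) :=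
  SimpleGraph.fromRel fun a b =>
    match a, b with
    | .inl i, .inl j =>
        i ≠ j ∧ ¬(i = 0 ∧ j = 1) ∧ ¬(i = 1 ∧ j = 0) ∧ ¬(i = 0 ∧ j = 2) ∧ ¬(i = 2 ∧ j = 0)
    | .inl i, .inr k => (k = 0 ∧ (i = 0 ∨ i = 1)) ∨ (k = 1 ∧ (i = 0 ∨ i = 2))
    | .inr _, .inr _ => True
    | _, _ => False

/-- `K₃,₃ʰ`: subdivide two edges of `K₃,₃` at a common endpoint and join
the two subdivision vertices. -/
def K33h : SimpleGraph ((Fin 3 ⊕ Fin 3) ⊕ Fin 2) :=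
  SimpleGraph.fromRel fun a b =>
    match a, b with
    | .inl (.inl i), .inl (.inr j) => ¬(i = 0 ∧ (j = 0 ∨ j = 1))
    | .inl (.inr j), .inl (.inl i) => ¬(i = 0 ∧ (j = 0 ∨ j = 1))
    | .inl x, .inr k =>
        (k = 0 ∧ (x = Sum.inl 0 ∨ x = Sum.inr 0)) ∨ (k = 1 ∧ (x = Sum.inl 0 ∨ x = Sum.inr 1))
    | .inr _, .inr _ => True
    | _, _ => False

/-- `K₅⁺`: `K₅` plus a pendant vertex. -/
def K5plus : SimpleGraph (Option (Fin 5)) :=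
  SimpleGraph.fromRel fun a b =>
    match a, b with
    | some i, some j => i ≠ j
    | none, some j => j = 0
    | _, _ => False

/-- `K₃,₃⁺`: `K₃,₃` plus a pendant vertex. -/
def K33plus : SimpleGraph (Option (Fin 3 ⊕ Fin 3)) :=
  SimpleGraph.fromRel fun a b =>
    match a, b with
    | some (.inl _), some (.inr _) => True
    | none, some x => x = Sum.inl 0
    | _, _ => False

/-- `K₅ ⊕ e`: disjoint union of `K₅` and one edge. -/
def K5oplus : SimpleGraph (Fin 5 ⊕ Fin 2) :=
  SimpleGraph.fromRel fun a b =>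
    match a, b with
    | .inl i, .inl j => i ≠ j
    | .inr _, .inr _ => True
    | _, _ => False

/-- `K₃,₃ ⊕ e`: disjoint union of `K₃,₃` and one edge. -/
def K33oplus : SimpleGraph ((Fin 3 ⊕ Fin 3) ⊕ Fin 2) :=
  SimpleGraph.fromRel fun a b =>
    match a, b with
    | .inl (.inl _), .inl (.inr _) => True
    | .inr _, .inr _ => True
    | _, _ => False

/-- The triad addition of `H` at `x y z`: add a new vertex joined to `x`, `y`, `z`. -/
def triadAddition {U : Type*} (H : SimpleGraph U) (x y z : U) : SimpleGraph (Option U) :=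
  SimpleGraph.fromRel fun a b =>
    match a, b with
    | some u, some v => H.Adj u v
    | none, some u => u = x ∨ u = y ∨ u = z
    | _, _ => False

def IsTriadAdditionOf {V U : Type*} (G : SimpleGraph V) (H : SimpleGraph U) : Prop :=
  ∃ x y z : U, x ≠ y ∧ y ≠ z ∧ x ≠ z ∧ Nonempty (G ≃g triadAddition H x y z)

/-- `G` is obtained from `H` by subdividing (possibly repeatedly) edges of `H`,
all of which lie in `S`. -/
def IsSubdivisionWithin {V W : Type*} (G : SimpleGraph V) (H : SimpleGraph W)
    (S : Set (Sym2 W)) : Prop :=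
  ∃ (f : W ↪ V) (p : ∀ ⦃u v : W⦄, H.Adj u v → G.Walk (f u) (f v)),
    (∀ ⦃u v : W⦄ (h : H.Adj u v), (p h).IsPath) ∧
    (∀ ⦃u v : W⦄ (h : H.Adj u v), p h.symm = (p h).reverse) ∧
    (∀ ⦃u v : W⦄ (h : H.Adj u v), s(u, v) ∉ S → (p h).length = 1) ∧
    (∀ ⦃u v : W⦄ (h : H.Adj u v) (w : W), f w ∈ (p h).support → w = u ∨ w = v) ∧
    (∀ ⦃u v u' v' : W⦄ (h : H.Adj u v) (h' : H.Adj u' v'), s(u, v) ≠ s(u', v') →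
      ∀ x : V, x ∈ (p h).support → x ∈ (p h').support → x ∈ Set.range f) ∧
    (∀ x : V, x ∈ Set.range f ∨ ∃ (u v : W) (h : H.Adj u v), x ∈ (p h).support) ∧
    (∀ e ∈ G.edgeSet, ∃ (u v : W) (h : H.Adj u v), e ∈ (p h).edges)

/-- `G` is a subdivision of `H`. -/
def IsSubdivision {V W : Type*} (G : SimpleGraph V) (H : SimpleGraph W) : Prop :=
  IsSubdivisionWithin G H Set.univ

/-- `D(H)`: the set of edges of `H` whose deletion leaves a planar graph. -/
def Dset {U : Type*} (H : SimpleGraph U) : Set (Sym2 U) :=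
  {e | e ∈ H.edgeSet ∧ Planar (H.deleteEdges {e})}

/-- `G[A]` together with all edges between vertices of `T` (`T ⊆ A` intended). -/
def deltaGraph {V : Type*} (G : SimpleGraph V) (A T : Set V) : SimpleGraph A :=
  SimpleGraph.fromRel fun a b => G.Adj a.1 b.1 ∨ (a.1 ∈ T ∧ b.1 ∈ T)

/-- `G[A]^Y` for the separation `{G[A], G[B]}`: add a new vertex joined to `A ∩ B`. -/
def sepY {V : Type*} (G : SimpleGraph V) (A B : Set V) : SimpleGraph (Option A) :=
  SimpleGraph.fromRel fun x y =>
    match x, y with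
    | some a, some b => G.Adj a.1 b.1
    | none, some a => a.1 ∈ A ∩ B
    | _, _ => False

/-- `G₂` is obtained from `G` by adding isolated vertices. -/
def AddIsolated {V₂ V : Type*} (G₂ : SimpleGraph V₂) (G : SimpleGraph V) : Prop :=
  ∃ f : V ↪ V₂, (∀ a b : V, G₂.Adj (f a) (f b) ↔ G.Adj a b) ∧
    ∀ x : V₂, x ∉ Set.range f → ∀ y : V₂, ¬ G₂.Adj x y

/-- The set of non-isolated vertices of `G` (so `G* = G.induce (core G)`). -/
def core {V : Type*} (G : SimpleGraph V) : Set V := {v | ∃ w, G.Adj v w}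

/-- `G` is obtained from `G'` by 3-summing wheels onto distinct triangles of `G'`. -/
def SumWheelsOnto {V U : Type*} (G : SimpleGraph V) (G' : SimpleGraph U) : Prop :=
  ∃ (g : U ↪ V) (k : ℕ) (Wp : Fin k → Set V) (T : Fin k → Set U),
    (∀ i, (T i).ncard = 3) ∧
    (∀ i, ∀ x ∈ T i, ∀ y ∈ T i, x ≠ y → G'.Adj x y) ∧
    Function.Injective T ∧
    (∀ i, Disjoint (Wp i) (Set.range ⇑g)) ∧
    (Pairwise fun i j => Disjoint (Wp i) (Wp j)) ∧
    (Set.range ⇑g ∪ ⋃ i, Wp i) = Set.univ ∧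
    (∀ i, IsWheel (deltaGraph G (Wp i ∪ ⇑g '' T i) (⇑g '' T i))) ∧
    (∀ a b : U, G.Adj (g a) (g b) → G'.Adj a b) ∧
    (∀ a b : U, G'.Adj a b → (G.Adj (g a) (g b) ∨ ∃ i, a ∈ T i ∧ b ∈ T i)) ∧
    (∀ ⦃x y : V⦄, G.Adj x y → (x ∈ Set.range ⇑g ∧ y ∈ Set.range ⇑g) ∨
      ∃ i, x ∈ Wp i ∪ ⇑g '' T i ∧ y ∈ Wp i ∪ ⇑g '' T i) ∧
    (∀ i, ∀ x ∈ Wp i, ∀ ⦃y : V⦄, G.Adj x y → y ∈ Wp i ∪ ⇑g '' T i)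

/-- `H` has an edge whose deletion and contraction are both nonplanar. -/
def HasBadEdge {V : Type*} (H : SimpleGraph V) : Prop :=
  ∃ u v : V, H.Adj u v ∧ ¬ Planar (H.deleteEdges {s(u, v)}) ∧ ¬ Planar (contractEdge H u v)


/-
No separation of order at most two with `x` and its neighbours on one side hides on the other side
a bag of the given minor model of `K₅` or `K₃,₃`: the model is tied to `x`. It suffices to find in
`G - x` a model of `K₂,₃` in which the three bags of the larger side each contain a neighbour of
`x`: adding `{x}` gives a model of `K₃,₃`, and a minor of maximum degree three is topological.

Induct on the number of non-isolated vertices, contracting edges that avoid `x`, do not join two of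
its neighbours and do not join two different bags. If a contraction destroys tiedness, there is a
separation of order three whose side containing `x` carries, by Menger's theorem, three disjoint
paths from the neighbours of `x` to the separator, and that side may be replaced by `x` joined to
the separator. If no edge can be contracted, every bag without a neighbour of `x` is a single
vertex, and the ways in which three neighbours attach to `K₅` or `K₃,₃` are few.
-/

namespace RootedK33

section ConnectedOn

variable {V : Type*} {G H : SimpleGraph V} {S T A B : Set V}

/-- The vertex set `S` is nonempty and connected in `G`. -/
abbrev ConnectedOn (G : SimpleGraph V) (S : Set V) : Prop := (G.induce S).Connected

lemma connectedOn_iff : ConnectedOn G S ↔ S.Nonempty ∧ ∀ T : Set V, (S ∩ T).Nonempty →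
    (∀ a ∈ S ∩ T, ∀ b ∈ S, G.Adj a b → b ∈ T) → S ⊆ T := by
  constructor
  · intro hS
    refine ⟨Set.nonempty_coe_sort.1 hS.nonempty, fun T ⟨a, haS, haT⟩ hT b hb => ?_⟩
    obtain ⟨p⟩ := hS.preconnected ⟨a, haS⟩ ⟨b, hb⟩
    suffices ∀ (c d : S), (G.induce S).Walk c d → c.1 ∈ T → d.1 ∈ T from this _ _ p haT
    intro c d q hc
    induction q with
    | nil => exact hc
    | cons h _ ih => exact ih (hT _ ⟨Subtype.prop _, hc⟩ _ (Subtype.prop _) h)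
  · rintro ⟨⟨a, ha⟩, hS⟩
    rw [ConnectedOn, connected_iff_exists_forall_reachable]
    refine ⟨⟨a, ha⟩, fun ⟨b, hb⟩ => ?_⟩
    let T : Set V := {v | ∃ h : v ∈ S, (G.induce S).Reachable ⟨a, ha⟩ ⟨v, h⟩}
    have hT : ∀ c ∈ S ∩ T, ∀ d ∈ S, G.Adj c d → d ∈ T := fun c ⟨_, hc, hac⟩ d hd hcd =>
      ⟨hd, hac.trans (Adj.reachable (G := G.induce S) (u := ⟨c, hc⟩) (v := ⟨d, hd⟩) hcd)⟩
    obtain ⟨_, h⟩ := hS T ⟨a, ha, ha, .rfl⟩ hT hb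
    exact h

namespace ConnectedOn

lemma nonempty (hS : ConnectedOn G S) : S.Nonempty := (connectedOn_iff.1 hS).1

lemma subset_of_closed (hS : ConnectedOn G S) (hST : (S ∩ T).Nonempty)
    (hT : ∀ a ∈ S ∩ T, ∀ b ∈ S, G.Adj a b → b ∈ T) : S ⊆ T :=
  (connectedOn_iff.1 hS).2 T hST hT

lemma mono_adj (hS : ConnectedOn G S) (h : ∀ a ∈ S, ∀ b ∈ S, G.Adj a b → H.Adj a b) :
    ConnectedOn H S :=
  connectedOn_iff.2 ⟨hS.nonempty, fun _ hST hT => hS.subset_of_closed hST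
    fun a ha b hb hab => hT a ha b hb (h a ha.1 b hb hab)⟩

lemma mono_graph (hS : ConnectedOn G S) (h : G ≤ H) : ConnectedOn H S :=
  hS.mono_adj fun _ _ _ _ hab => h hab

lemma singleton (G : SimpleGraph V) (a : V) : ConnectedOn G {a} :=
  connectedOn_iff.2 ⟨Set.singleton_nonempty a, fun _ hT _ => by simpa using hT⟩

lemma union (hS : ConnectedOn G S) (hT : ConnectedOn G T) (h : (S ∩ T).Nonempty) :
    ConnectedOn G (S ∪ T) :=
  induce_union_connected hS.preconnected hT.preconnected h

lemma union_adj (hS : ConnectedOn G S) (hT : ConnectedOn G T) {a b : V} (ha : a ∈ S)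
    (hb : b ∈ T) (hab : G.Adj a b) : ConnectedOn G (S ∪ T) :=
  connected_induce_union hS.preconnected hT.preconnected ha hb hab

lemma subset_of_spanningCoe (hS : ConnectedOn (G.induce A).spanningCoe S)
    (h : (S ∩ A).Nonempty) : S ⊆ A :=
  hS.subset_of_closed h fun a _ b _ hab => by
    obtain ⟨_, b, _, _, rfl⟩ := (map_adj ..).1 hab
    exact b.2

end ConnectedOn

/-- `(A, B)` is a separation of `G`: the two sets cover all vertices and no edge joins `A \ B`
to `B \ A`. Unlike in `IsSep`, the sides may be improper. -/
structure IsSeparation (G : SimpleGraph V) (A B : Set V) : Prop where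
  cover : ∀ v, v ∈ A ∨ v ∈ B
  adj : ∀ ⦃a b⦄, G.Adj a b → (a ∈ A ∧ b ∈ A) ∨ (a ∈ B ∧ b ∈ B)

lemma IsSeparation.symm (h : IsSeparation G A B) : IsSeparation G B A :=
  ⟨fun v => (h.cover v).symm, fun _ _ hab => (h.adj hab).symm⟩

lemma IsSeparation.mem_right (h : IsSeparation G A B) {a b : V} (hab : G.Adj a b)
    (ha : a ∉ A) : b ∈ B :=
  ((h.adj hab).resolve_left fun hA => ha hA.1).2

lemma ConnectedOn.meets_separator (hS : ConnectedOn G S) (h : IsSeparation G A B)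
    (hA : (S ∩ A).Nonempty) (hB : (S ∩ B).Nonempty) : (S ∩ (A ∩ B)).Nonempty := by
  by_contra hno
  have hAB : ∀ a ∈ S, a ∈ A → a ∉ B := fun a ha haA haB => hno ⟨a, ha, haA, haB⟩
  have hSA : S ⊆ A := hS.subset_of_closed hA fun a ha b _ hab =>
    ((h.adj hab).resolve_right fun hB => hAB a ha.1 ha.2 hB.1).2
  obtain ⟨b, hbS, hbB⟩ := hB
  exact hAB b hbS (hSA hbS) hbB

end ConnectedOn

section Menger

variable {V : Type*} {G : SimpleGraph V} {Y Z A B : Set V} {u v : V} {k : ℕ}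

/-- The family `P` links `Y` to `Z`: its members are disjoint connected sets, each meeting both
`Y` and `Z`. This stands for a family of disjoint `Y`-`Z` paths. -/
structure IsLinkage (G : SimpleGraph V) (Y Z : Set V) {k : ℕ} (P : Fin k → Set V) : Prop where
  connected : ∀ i, ConnectedOn G (P i)
  disjoint : Pairwise fun i j => Disjoint (P i) (P j)
  meets_left : ∀ i, (P i ∩ Y).Nonempty
  meets_right : ∀ i, (P i ∩ Z).Nonempty

/-- Menger's condition: no separation of order less than `k` separates `Y` from `Z`. -/
def MengerCondition (G : SimpleGraph V) (Y Z : Set V) (k : ℕ) : Prop :=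
  ∀ A B : Set V, IsSeparation G A B → Y ⊆ A → Z ⊆ B → k ≤ (A ∩ B).ncard

lemma eq_of_mem_of_mem {ι : Type*} {P : ι → Set V} (hP : Pairwise fun i j => Disjoint (P i) (P j))
    {i j : ι} {a : V} (hi : a ∈ P i) (hj : a ∈ P j) : i = j :=
  hP.eq (Set.not_disjoint_iff.2 ⟨a, hi, hj⟩)

lemma IsLinkage.symm {P : Fin k → Set V} (h : IsLinkage G Y Z P) : IsLinkage G Z Y P :=
  ⟨h.connected, h.disjoint, h.meets_right, h.meets_left⟩

lemma IsLinkage.mono_graph {H : SimpleGraph V} {P : Fin k → Set V} (h : IsLinkage G Y Z P)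
    (hGH : G ≤ H) : IsLinkage H Y Z P :=
  ⟨fun i => (h.connected i).mono_graph hGH, h.disjoint, h.meets_left, h.meets_right⟩

lemma MengerCondition.symm (h : MengerCondition G Y Z k) : MengerCondition G Z Y k :=
  fun A B hAB hZ hY => Set.inter_comm A B ▸ h B A hAB.symm hY hZ

lemma MengerCondition.exists_linkage_of_edgeless [Finite V] (hE : ∀ a b, ¬ G.Adj a b)
    (h : MengerCondition G Y Z k) : ∃ P : Fin k → Set V, IsLinkage G Y Z P := by
  have hYZ : k ≤ (Y ∩ Z).ncard := by
    have := h Y (Yᶜ ∪ Z) ⟨fun v => (em (v ∈ Y)).imp_right .inl, fun a b hab => (hE a b hab).elim⟩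
      le_rfl Set.subset_union_right
    rwa [Set.inter_union_distrib_left, Set.inter_compl_self, Set.empty_union] at this
  obtain ⟨t, ht, htc⟩ := Set.exists_subset_card_eq hYZ
  obtain ⟨e⟩ : Nonempty (Fin k ≃ t) := ⟨(finCongr htc.symm).trans (Finite.equivFin t).symm⟩
  exact ⟨fun i => {(e i : V)}, fun i => .singleton _ _,
    fun i j hij => Set.disjoint_singleton.2 fun he => hij (e.injective (Subtype.ext he)),
    fun i => ⟨e i, rfl, (ht (e i).2).1⟩, fun i => ⟨e i, rfl, (ht (e i).2).2⟩⟩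

lemma MengerCondition.of_induce_left [Finite V] (h : MengerCondition G Y Z k)
    (hAB : IsSeparation (G.deleteEdges {s(u, v)}) A B) (hY : Y ⊆ A) (hZ : Z ⊆ B) (hv : v ∈ B) :
    MengerCondition (G.induce A).spanningCoe Y (insert u (A ∩ B)) k := by
  intro A' B' hAB' hY' hu
  obtain ⟨huB', hABB'⟩ := Set.insert_subset_iff.1 hu
  have hsep : IsSeparation G (A' ∩ A) (B' ∪ B) := by
    refine ⟨fun w => ?_, fun a b hab => ?_⟩
    · have := hAB.cover w
      have := hAB'.cover w
      simp only [Set.mem_inter_iff, Set.mem_union]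
      tauto
    · by_cases he : s(a, b) = s(u, v)
      · obtain ⟨rfl, rfl⟩ | ⟨rfl, rfl⟩ := Sym2.eq_iff.1 he
        · exact .inr ⟨.inl huB', .inr hv⟩
        · exact .inr ⟨.inr hv, .inl huB'⟩
      · obtain ⟨ha, hb⟩ | hB := hAB.adj (deleteEdges_adj.2 ⟨hab, he⟩)
        · have hab' : (G.induce A).spanningCoe.Adj a b :=
            (map_adj ..).2 ⟨⟨a, ha⟩, ⟨b, hb⟩, hab, rfl, rfl⟩
          exact (hAB'.adj hab').imp (fun h => ⟨⟨h.1, ha⟩, h.2, hb⟩) fun h => ⟨.inl h.1, .inl h.2⟩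
        · exact .inr ⟨.inr hB.1, .inr hB.2⟩
  refine (h _ _ hsep (Set.subset_inter hY' hY) (hZ.trans Set.subset_union_right)).trans
    (Set.ncard_le_ncard ?_)
  rintro w ⟨⟨hwA', hwA⟩, hwB' | hwB⟩
  · exact ⟨hwA', hwB'⟩
  · exact ⟨hwA', hABB' ⟨hwA, hwB⟩⟩

lemma MengerCondition.of_induce_right [Finite V] (h : MengerCondition G Y Z k)
    (hAB : IsSeparation (G.deleteEdges {s(u, v)}) A B) (hY : Y ⊆ A) (hZ : Z ⊆ B) (hu : u ∈ A) :
    MengerCondition (G.induce B).spanningCoe (insert v (A ∩ B)) Z k := by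
  rw [Sym2.eq_swap] at hAB
  exact Set.inter_comm A B ▸ (h.symm.of_induce_left hAB.symm hZ hY hu).symm

lemma MengerCondition.exists_crossing_edge (h : MengerCondition G Y Z k) {a b : V}
    (hab : G.Adj a b) (hdel : ¬ MengerCondition (G.deleteEdges {s(a, b)}) Y Z k) :
    ∃ u v A B, G.Adj u v ∧ IsSeparation (G.deleteEdges {s(u, v)}) A B ∧ Y ⊆ A ∧ Z ⊆ B ∧
      u ∈ A ∧ u ∉ B ∧ v ∈ B ∧ v ∉ A ∧ (A ∩ B).ncard < k := by
  simp only [MengerCondition, not_forall, not_le] at hdel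
  obtain ⟨A, B, hAB, hY, hZ, hk⟩ := hdel
  have hcross : ¬ ((a ∈ A ∧ b ∈ A) ∨ (a ∈ B ∧ b ∈ B)) := fun hc => by
    refine (h A B ⟨hAB.cover, fun c d hcd => ?_⟩ hY hZ).not_gt hk
    by_cases he : s(c, d) = s(a, b)
    · obtain ⟨rfl, rfl⟩ | ⟨rfl, rfl⟩ := Sym2.eq_iff.1 he
      · exact hc
      · exact hc.imp And.symm And.symm
    · exact hAB.adj (deleteEdges_adj.2 ⟨hcd, he⟩)
  have ha := hAB.cover a
  have hb := hAB.cover b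
  by_cases haA : a ∈ A
  · exact ⟨a, b, A, B, hab, hAB, hY, hZ, haA, by tauto, by tauto, by tauto, hk⟩
  · exact ⟨b, a, A, B, hab.symm, Sym2.eq_swap ▸ hAB, hY, hZ, by tauto, by tauto, by tauto, haA, hk⟩

lemma IsLinkage.exists_endpoints [Finite V] {P : Fin k → Set V} (h : IsLinkage G Y Z P)
    (hZ : Z.ncard ≤ k) :
    ∃ e : Fin k → V, (∀ i, e i ∈ P i) ∧ Function.Injective e ∧ Set.range e = Z := by
  choose e heP heZ using h.meets_right
  have hinj : Function.Injective e := fun i j hij =>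
    eq_of_mem_of_mem h.disjoint (heP i) (hij ▸ heP j)
  refine ⟨e, heP, hinj, Set.eq_of_subset_of_ncard_le (Set.range_subset_iff.2 heZ) ?_⟩
  rwa [← Nat.card_coe_set_eq (Set.range e), Nat.card_range_of_injective hinj, Nat.card_fin]

lemma IsLinkage.glue {X X' : Set V} {P Q : Fin k → Set V} (hP : IsLinkage G Y X P)
    (hQ : IsLinkage G X' Z Q) (σ : Fin k → Fin k) (hσ : Function.Injective σ)
    (hPQ : ∀ i j, (P i ∩ Q j).Nonempty → j = σ i)
    (hconn : ∀ i, ConnectedOn G (P i ∪ Q (σ i))) :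
    IsLinkage G Y Z fun i => P i ∪ Q (σ i) := by
  refine ⟨hconn, fun i j hij => Set.disjoint_left.2 ?_,
    fun i => (hP.meets_left i).mono (Set.inter_subset_inter_left _ Set.subset_union_left),
    fun i => (hQ.meets_right _).mono (Set.inter_subset_inter_left _ Set.subset_union_right)⟩
  rintro w (hi | hi) (hj | hj)
  · exact hij (eq_of_mem_of_mem hP.disjoint hi hj)
  · exact hij (hσ (hPQ i _ ⟨w, hi, hj⟩).symm)
  · exact hij (hσ (hPQ j _ ⟨w, hj, hi⟩))
  · exact hij (hσ (eq_of_mem_of_mem hQ.disjoint hi hj))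

lemma IsLinkage.exists_glue_across_edge [Finite V] {P Q : Fin k → Set V} (huv : G.Adj u v)
    (hvA : v ∉ A) (huB : u ∉ B) (hPA : ∀ i, P i ⊆ A) (hQB : ∀ i, Q i ⊆ B)
    (hk : (A ∩ B).ncard < k) (hP : IsLinkage G Y (insert u (A ∩ B)) P)
    (hQ : IsLinkage G (insert v (A ∩ B)) Z Q) : ∃ R : Fin k → Set V, IsLinkage G Y Z R := by
  classical
  obtain ⟨s, hsP, hs, hsR⟩ := hP.exists_endpoints ((Set.ncard_insert_le u _).trans hk)
  obtain ⟨t, htQ, ht, htR⟩ := hQ.symm.exists_endpoints ((Set.ncard_insert_le v _).trans hk)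
  have hσ : ∀ i, ∃ j, t j = if s i = u then v else s i := fun i => by
    have hi : s i ∈ insert u (A ∩ B) := hsR ▸ Set.mem_range_self i
    change _ ∈ Set.range t
    rw [htR]
    split_ifs with h
    exacts [.inl rfl, .inr (hi.resolve_left h)]
  choose σ hσ using hσ
  have hsv : ∀ i, s i ≠ v := fun i h => hvA (h ▸ hPA i (hsP i))
  refine ⟨_, hP.glue hQ σ (fun i j hij => hs ?_) ?_ fun i => ?_⟩
  · have h := hσ i
    rw [hij, hσ j] at h
    have := hsv i
    have := hsv j
    grind
  · rintro i j ⟨w, hwP, hwQ⟩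
    have hw : w ∈ A ∩ B := ⟨hPA i hwP, hQB j hwQ⟩
    obtain ⟨i', rfl⟩ : w ∈ Set.range s := hsR ▸ .inr hw
    obtain ⟨j', hj'⟩ : s i' ∈ Set.range t := htR ▸ .inr hw
    obtain rfl := eq_of_mem_of_mem hP.disjoint hwP (hsP i')
    obtain rfl := eq_of_mem_of_mem hQ.disjoint hwQ (hj' ▸ htQ j')
    have hu : s i ≠ u := fun h => huB (h ▸ hw.2)
    exact ht (by rw [hj', hσ, if_neg hu])
  · have h := hσ i
    split_ifs at h with hi
    · exact (hP.connected i).union_adj (hQ.connected _) (hi ▸ hsP i) (h ▸ htQ _) huv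
    · exact (hP.connected i).union (hQ.connected _) ⟨s i, hsP i, h ▸ htQ _⟩

lemma ncard_edgeSet_lt [Finite V] {H : SimpleGraph V} (hle : H ≤ G) (huv : G.Adj u v)
    (hH : ¬ H.Adj u v) : H.edgeSet.ncard < G.edgeSet.ncard :=
  Set.ncard_lt_ncard ⟨edgeSet_mono hle, fun h => hH (h (mem_edgeSet G |>.2 huv))⟩

theorem MengerCondition.exists_linkage [Finite V] (h : MengerCondition G Y Z k) :
    ∃ P : Fin k → Set V, IsLinkage G Y Z P := by
  induction hn : G.edgeSet.ncard using Nat.strong_induction_on generalizing G Y Z with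
  | _ n ih =>
  subst hn
  by_cases hE : ∃ a b, G.Adj a b
  swap
  · exact h.exists_linkage_of_edgeless fun a b hab => hE ⟨a, b, hab⟩
  obtain ⟨a, b, hab⟩ := hE
  by_cases hdel : MengerCondition (G.deleteEdges {s(a, b)}) Y Z k
  · obtain ⟨P, hP⟩ := ih _ (ncard_edgeSet_lt (deleteEdges_le _) hab (by simp)) hdel rfl
    exact ⟨P, hP.mono_graph (deleteEdges_le _)⟩
  obtain ⟨u, v, A, B, huv, hAB, hY, hZ, huA, huB, hvB, hvA, hk⟩ := h.exists_crossing_edge hab hdel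
  obtain ⟨P, hP⟩ := ih _ (ncard_edgeSet_lt (G.spanningCoe_induce_le A) huv (by simp [hvA]))
    (h.of_induce_left hAB hY hZ hvB) rfl
  obtain ⟨Q, hQ⟩ := ih _ (ncard_edgeSet_lt (G.spanningCoe_induce_le B) huv (by simp [huB]))
    (h.of_induce_right hAB hY hZ huA) rfl
  have hPA : ∀ i, P i ⊆ A := fun i => (hP.connected i).subset_of_spanningCoe
    ((hP.meets_left i).mono (Set.inter_subset_inter_right _ hY))
  have hQB : ∀ i, Q i ⊆ B := fun i => (hQ.connected i).subset_of_spanningCoe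
    ((hQ.meets_right i).mono (Set.inter_subset_inter_right _ hZ))
  exact IsLinkage.exists_glue_across_edge huv hvA huB hPA hQB hk
    (hP.mono_graph (G.spanningCoe_induce_le A)) (hQ.mono_graph (G.spanningCoe_induce_le B))

end Menger

section Models

variable {V V' W : Type*} {J : SimpleGraph W} {G : SimpleGraph V} {H : SimpleGraph V'}
  {μ : W → Set V} {x : V}

/-- The sets `μ w` are the bags of a minor model of `J` in `G`. -/
structure IsMinorModel (J : SimpleGraph W) (G : SimpleGraph V) (μ : W → Set V) : Prop where
  connected : ∀ w, ConnectedOn G (μ w)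
  disjoint : Pairwise fun w w' => Disjoint (μ w) (μ w')
  adj : ∀ ⦃w w'⦄, J.Adj w w' → ∃ a ∈ μ w, ∃ b ∈ μ w', G.Adj a b

/-- The bags `μ` are tied to the vertex `x`: a side of a separation of order at most two that
contains `x` and all its neighbours meets every bag. -/
def IsTied (G : SimpleGraph V) (x : V) (μ : W → Set V) : Prop :=
  ∀ A B : Set V, IsSeparation G A B → insert x (G.neighborSet x) ⊆ A → (A ∩ B).ncard ≤ 2 →
    ∀ w, (μ w ∩ A).Nonempty

lemma IsTied.three_le_ncard (hT : IsTied G x μ) {A B : Set V} (hAB : IsSeparation G A B)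
    (hA : insert x (G.neighborSet x) ⊆ A) {w : W} (hw : Disjoint (μ w) A) :
    3 ≤ (A ∩ B).ncard := by
  by_contra hlt
  exact Set.not_disjoint_iff_nonempty_inter.2 (hT A B hAB hA (by omega) w) hw

/-- The sets `A j` and `C i` form a model of `K₂,₃` in `G - x` in which each of the three bags
`C i` contains a neighbour of `x`. Together with `x` this is a model of `K₃,₃`. -/
structure IsRootedK23 (G : SimpleGraph V) (x : V) (A : Fin 2 → Set V) (C : Fin 3 → Set V) :
    Prop where
  connected_left : ∀ j, ConnectedOn G (A j)
  connected_right : ∀ i, ConnectedOn G (C i)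
  notMem_left : ∀ j, x ∉ A j
  notMem_right : ∀ i, x ∉ C i
  disjoint_left : Pairwise fun j j' => Disjoint (A j) (A j')
  disjoint_right : Pairwise fun i i' => Disjoint (C i) (C i')
  disjoint : ∀ j i, Disjoint (A j) (C i)
  rooted : ∀ i, ∃ y ∈ C i, G.Adj x y
  adj : ∀ j i, ∃ a ∈ A j, ∃ c ∈ C i, G.Adj a c

/-- `G - x` has a model of `K₂,₃` rooted at neighbours of `x`. -/
def HasRootedK23 (G : SimpleGraph V) (x : V) : Prop := ∃ A C, IsRootedK23 G x A C

/-- `φ` contracts cliques of `G` to obtain `H`. Vertices of `H` outside the range of `φ` are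
isolated. -/
structure IsContraction (G : SimpleGraph V) (H : SimpleGraph V') (φ : V → V') : Prop where
  adj_iff : ∀ ⦃p q⦄, H.Adj p q ↔ p ≠ q ∧ ∃ a b, G.Adj a b ∧ φ a = p ∧ φ b = q
  adj_of_eq : ∀ ⦃a b⦄, φ a = φ b → a ≠ b → G.Adj a b

namespace IsContraction

variable {φ : V → V'} {S : Set V} {T : Set V'}

lemma eq_or_adj (h : IsContraction G H φ) {a b : V} (hab : G.Adj a b) :
    φ a = φ b ∨ H.Adj (φ a) (φ b) :=
  (em (φ a = φ b)).imp_right fun hne => h.adj_iff.2 ⟨hne, a, b, hab, rfl, rfl⟩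

lemma connectedOn_image (h : IsContraction G H φ) (hS : ConnectedOn G S) :
    ConnectedOn H (φ '' S) := by
  refine connectedOn_iff.2 ⟨hS.nonempty.image φ, fun T ⟨_, ⟨a, ha, rfl⟩, haT⟩ hT => ?_⟩
  refine Set.image_subset_iff.2 (hS.subset_of_closed ⟨a, ha, haT⟩ fun b hb c hc hbc => ?_)
  obtain he | hadj := h.eq_or_adj hbc
  · exact Set.mem_preimage.2 (he ▸ hb.2)
  · exact hT _ ⟨⟨b, hb.1, rfl⟩, hb.2⟩ _ ⟨c, hc, rfl⟩ hadj

lemma connectedOn_preimage (h : IsContraction G H φ) (hT : ConnectedOn H T)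
    (hne : (φ ⁻¹' T).Nonempty) : ConnectedOn G (φ ⁻¹' T) := by
  refine connectedOn_iff.2 ⟨hne, fun U ⟨a, haT, haU⟩ hU => ?_⟩
  have hfiber : ∀ b ∈ φ ⁻¹' T ∩ U, ∀ c, φ c = φ b → c ∈ U := fun b hb c hcb => by
    by_cases hne : b = c
    · exact hne ▸ hb.2
    · exact hU b hb c (Set.mem_preimage.2 (hcb ▸ hb.1)) (h.adj_of_eq hcb.symm hne)
  have hTU : T ⊆ φ '' U := hT.subset_of_closed ⟨φ a, haT, a, haU, rfl⟩ <| by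
    rintro _ ⟨hbT, b, hb, rfl⟩ q hq hbq
    obtain ⟨-, b', c, hbc, hb', rfl⟩ := h.adj_iff.1 hbq
    have hbT' : b' ∈ φ ⁻¹' T := Set.mem_preimage.2 (hb' ▸ hbT)
    exact ⟨c, hU b' ⟨hbT', hfiber b ⟨hbT, hb⟩ b' hb'⟩ c hq hbc, rfl⟩
  intro c hc
  obtain ⟨b, hb, hbc⟩ := hTU hc
  exact hfiber b ⟨Set.mem_preimage.2 (hbc ▸ hc), hb⟩ c hbc.symm

lemma isSeparation_preimage (h : IsContraction G H φ) {A B : Set V'} (hAB : IsSeparation H A B) :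
    IsSeparation G (φ ⁻¹' A) (φ ⁻¹' B) := by
  refine ⟨fun v => hAB.cover (φ v), fun a b hab => ?_⟩
  obtain he | hadj := h.eq_or_adj hab
  · simp only [Set.mem_preimage, he, and_self, hAB.cover]
  · exact hAB.adj hadj

lemma isMinorModel_image (h : IsContraction G H φ) (hμ : IsMinorModel J G μ)
    (hφ : ∀ ⦃w w' a b⦄, a ∈ μ w → b ∈ μ w' → φ a = φ b → w = w') :
    IsMinorModel J H fun w => φ '' μ w := by
  refine ⟨fun w => h.connectedOn_image (hμ.connected w), fun w w' hww' => ?_, fun w w' hww' => ?_⟩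
  · refine Set.disjoint_left.2 ?_
    rintro _ ⟨a, ha, rfl⟩ ⟨b, hb, hba⟩
    exact hww' (hφ ha hb hba.symm)
  · obtain ⟨a, ha, b, hb, hab⟩ := hμ.adj hww'
    exact ⟨_, ⟨a, ha, rfl⟩, _, ⟨b, hb, rfl⟩,
      (h.eq_or_adj hab).resolve_left fun he => hww'.ne (hφ ha hb he)⟩

lemma neighborSet (h : IsContraction G H φ) (hx : ∀ a, φ a = φ x → a = x) :
    H.neighborSet (φ x) = φ '' G.neighborSet x := by
  ext q
  constructor
  · intro hq
    obtain ⟨-, a, b, hab, ha, rfl⟩ := h.adj_iff.1 hq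
    obtain rfl := hx a ha
    exact ⟨b, hab, rfl⟩
  · rintro ⟨y, hy, rfl⟩
    exact (h.eq_or_adj hy).resolve_left fun he => hy.ne' (hx y he.symm)

lemma hasRootedK23 (h : IsContraction G H φ) (hx : ∀ a, φ a = φ x → a = x)
    (hH : HasRootedK23 H (φ x)) : HasRootedK23 G x := by
  obtain ⟨A, C, hAC⟩ := hH
  have hadj : ∀ j i, ∃ a ∈ φ ⁻¹' A j, ∃ c ∈ φ ⁻¹' C i, G.Adj a c := fun j i => by
    obtain ⟨_, ha, _, hc, hadj⟩ := hAC.adj j i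
    obtain ⟨-, a, c, hac, rfl, rfl⟩ := h.adj_iff.1 hadj
    exact ⟨a, ha, c, hc, hac⟩
  have hroot : ∀ i, ∃ y ∈ φ ⁻¹' C i, G.Adj x y := fun i => by
    obtain ⟨_, hy, hadj⟩ := hAC.rooted i
    obtain ⟨y, hxy, rfl⟩ := (h.neighborSet hx).subset hadj
    exact ⟨y, hy, hxy⟩
  refine ⟨fun j => φ ⁻¹' A j, fun i => φ ⁻¹' C i, ?_, ?_, hAC.notMem_left, hAC.notMem_right,
    fun j j' hj => (hAC.disjoint_left hj).preimage φ,
    fun i i' hi => (hAC.disjoint_right hi).preimage φ,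
    fun j i => (hAC.disjoint j i).preimage φ, hroot, hadj⟩
  · intro j
    obtain ⟨a, ha, -⟩ := hadj j 0
    exact h.connectedOn_preimage (hAC.connected_left j) ⟨a, ha⟩
  · intro i
    obtain ⟨y, hy, -⟩ := hroot i
    exact h.connectedOn_preimage (hAC.connected_right i) ⟨y, hy⟩

end IsContraction

open Classical in
/-- The map on vertices that realizes `contractEdge G u v`: it sends `v` to `u`. -/
noncomputable def contractMap (u v : V) : V → V := Function.update id v u

variable {u v : V}

@[simp] lemma contractMap_self (u v : V) : contractMap u v v = u := by
  simp [contractMap]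

lemma contractMap_of_ne {a : V} (h : a ≠ v) : contractMap u v a = a := by
  simp [contractMap, h]

lemma contractMap_eq_iff {a b : V} : contractMap u v a = contractMap u v b ↔
    a = b ∨ (a = u ∧ b = v) ∨ (a = v ∧ b = u) := by
  by_cases ha : a = v <;> by_cases hb : b = v <;>
    simp only [contractMap, Function.update_apply, ha, hb, id, if_true, if_false] <;> grind

lemma eq_of_contractMap_eq {a b : V} (hu : u ≠ b) (hv : v ≠ b)
    (h : contractMap u v a = contractMap u v b) : a = b := by
  obtain h | ⟨-, h⟩ | ⟨-, h⟩ := contractMap_eq_iff.1 h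
  exacts [h, (hv h.symm).elim, (hu h.symm).elim]

lemma preimage_contractMap_subset_insert (u v : V) (Z : Set V) :
    contractMap u v ⁻¹' Z ⊆ insert v Z := fun a ha => by
  by_cases hav : a = v
  · exact .inl hav
  · exact .inr (contractMap_of_ne (u := u) hav ▸ ha)

lemma preimage_contractMap_subset {Z : Set V} (hu : u ∉ Z) : contractMap u v ⁻¹' Z ⊆ Z :=
  (Set.subset_insert_iff_of_notMem fun hv : v ∈ contractMap u v ⁻¹' Z =>
    hu (contractMap_self u v ▸ Set.mem_preimage.1 hv)).1 (preimage_contractMap_subset_insert u v Z)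

lemma isContraction_contractEdge (huv : G.Adj u v) :
    IsContraction G (contractEdge G u v) (contractMap u v) := by
  refine ⟨fun p q => ?_, fun a b hab hne => ?_⟩
  · simp only [contractEdge, fromRel_adj]
    refine and_congr_right fun hpq => ⟨?_, ?_⟩
    · have hleft : ∀ {p q}, (p ≠ v ∧ q ≠ v ∧ (G.Adj p q ∨ p = u ∧ G.Adj v q ∨ q = u ∧ G.Adj p v)) →
          ∃ a b, G.Adj a b ∧ contractMap u v a = p ∧ contractMap u v b = q := by
        rintro p q ⟨hp, hq, h | ⟨rfl, h⟩ | ⟨rfl, h⟩⟩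
        · exact ⟨p, q, h, contractMap_of_ne hp, contractMap_of_ne hq⟩
        · exact ⟨v, q, h, contractMap_self _ v, contractMap_of_ne hq⟩
        · exact ⟨p, v, h, contractMap_of_ne hp, contractMap_self _ v⟩
      rintro (h | h)
      · exact hleft h
      · obtain ⟨a, b, hab, ha, hb⟩ := hleft h
        exact ⟨b, a, hab.symm, hb, ha⟩
    · rintro ⟨a, b, hab, rfl, rfl⟩
      have := huv.ne
      by_cases ha : a = v <;> by_cases hb : b = v <;>
        simp_all [contractMap_of_ne]
  · obtain rfl | ⟨rfl, rfl⟩ | ⟨rfl, rfl⟩ := contractMap_eq_iff.1 hab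
    exacts [(hne rfl).elim, huv, huv.symm]

lemma ncard_support_contractEdge_lt [Finite V] (huv : G.Adj u v) :
    (contractEdge G u v).support.ncard < G.support.ncard := by
  refine Set.ncard_lt_ncard ⟨fun p ⟨q, hpq⟩ => ?_, fun h => ?_⟩
  · obtain ⟨-, a, b, hab, rfl, -⟩ := (isContraction_contractEdge huv).adj_iff.1 hpq
    by_cases ha : a = v
    · exact ⟨v, by simpa [ha] using huv⟩
    · exact ⟨b, by rwa [contractMap_of_ne ha]⟩
  · obtain ⟨q, hvq⟩ := h ⟨u, huv.symm⟩
    simp [contractEdge] at hvq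

end Models

section ApexReduction

variable {V W : Type*} {J : SimpleGraph W} {G : SimpleGraph V} {μ : W → Set V} {x : V}
  {A B D : Set V}

lemma IsSeparation.diff_singleton (h : IsSeparation G A B)
    (hA : insert x (G.neighborSet x) ⊆ A) : IsSeparation G A (B \ {x}) := by
  obtain ⟨hxA, hNA⟩ := Set.insert_subset_iff.1 hA
  refine ⟨fun v => ?_, fun a b hab => ?_⟩
  · by_cases hv : v = x
    · exact .inl (hv ▸ hxA)
    · exact (h.cover v).imp_right fun hB => ⟨hB, hv⟩
  · by_cases ha : a = x
    · subst ha
      exact .inl ⟨hxA, hNA hab⟩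
    by_cases hb : b = x
    · subst hb
      exact .inl ⟨hNA hab.symm, hxA⟩
    exact (h.adj hab).imp_right fun hB => ⟨⟨hB.1, ha⟩, hB.2, hb⟩

lemma IsMinorModel.meets_separator_of_adj (h : IsMinorModel J G μ) (hAB : IsSeparation G A B)
    {w w' c : W} (hw : Disjoint (μ w) B) (hw' : Disjoint (μ w') A) (hwc : J.Adj w c)
    (hwc' : J.Adj w' c) : (μ c ∩ (A ∩ B)).Nonempty := by
  obtain ⟨a, ha, b, hb, hab⟩ := h.adj hwc
  obtain ⟨a', ha', b', hb', hab'⟩ := h.adj hwc'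
  exact (h.connected c).meets_separator hAB
    ⟨b, hb, hAB.symm.mem_right hab (Set.disjoint_left.1 hw ha)⟩
    ⟨b', hb', hAB.mem_right hab' (Set.disjoint_left.1 hw' ha')⟩

/-- Any two distinct nonadjacent vertices have three common neighbours, as in `K₅` and `K₃,₃`. -/
def NonadjHasThreeCommonNeighbors (J : SimpleGraph W) : Prop :=
  ∀ ⦃w w'⦄, w ≠ w' → ¬ J.Adj w w' →
    ∃ c : Fin 3 → W, Function.Injective c ∧ ∀ i, J.Adj w (c i) ∧ J.Adj w' (c i)

/-- A separation of order three with `x` and its neighbours on the left, whose separator consists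
of a set `D` meeting at most one bag and of at most one further vertex. The left side can then be
replaced by the single vertex `x`, joined to the separator. -/
structure IsApexSeparation (G : SimpleGraph V) (x : V) (μ : W → Set V) (A B D : Set V) : Prop
    extends IsSeparation G A B where
  closedNeighborSet_subset : insert x (G.neighborSet x) ⊆ A
  notMem_right : x ∉ B
  ncard_separator : (A ∩ B).ncard = 3
  subset_separator : D ⊆ A ∩ B
  eq_of_meets : ∀ ⦃w w'⦄, (μ w ∩ D).Nonempty → (μ w' ∩ D).Nonempty → w = w'
  subsingleton_diff : ((A ∩ B) \ D).Subsingleton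

/-- The graph obtained from `G[B]` by joining `x` to all vertices of `Z`. -/
def apexGraph (G : SimpleGraph V) (x : V) (Z B : Set V) : SimpleGraph V :=
  SimpleGraph.fromRel fun a b => (G.Adj a b ∧ a ∈ B ∧ b ∈ B) ∨ (a = x ∧ b ∈ Z)

lemma apexGraph_adj_apex {Z : Set V} (hZ : x ∉ Z) (hB : x ∉ B) {b : V} :
    (apexGraph G x Z B).Adj x b ↔ b ∈ Z := by
  simp only [apexGraph, fromRel_adj, hB, false_and, and_false, true_and, false_or, ne_eq, hZ]
  grind

lemma apexGraph_adj_of_ne {Z : Set V} {a b : V} (ha : a ≠ x) (hb : b ≠ x) :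
    (apexGraph G x Z B).Adj a b ↔ G.Adj a b ∧ a ∈ B ∧ b ∈ B := by
  simp only [apexGraph, fromRel_adj, ha, hb, false_and, or_false, G.adj_comm b a, and_comm, ne_eq,
    or_self]
  exact and_iff_right_of_imp fun h => h.2.ne

open Classical in
/-- The trace of the bags on the apex graph: each bag is restricted to `B`, and the bag meeting
`D` receives the apex `x`. -/
def apexBag (x : V) (B D : Set V) (μ : W → Set V) (w : W) : Set V :=
  if (μ w ∩ D).Nonempty then insert x (μ w ∩ B) else μ w ∩ B

/- Off `B`, membership in `T` is replaced by the common value `p` that it takes on the separator;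
the resulting set is closed in `S`. -/
lemma ConnectedOn.inter_subset_of_closed {S T : Set V} {p : Prop} (hS : ConnectedOn G S)
    (hAB : IsSeparation G A B) (hp : ∀ z ∈ S ∩ (A ∩ B), z ∈ T ↔ p)
    (hne : (S ∩ B ∩ T).Nonempty)
    (hT : ∀ a ∈ S ∩ B ∩ T, ∀ b ∈ S ∩ B, G.Adj a b → b ∈ T) : S ∩ B ⊆ T := by
  obtain ⟨c, ⟨hcS, hcB⟩, hcT⟩ := hne
  have hsub : S ⊆ {a | (a ∈ B ∧ a ∈ T) ∨ (a ∉ B ∧ p)} := by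
    refine hS.subset_of_closed ⟨c, hcS, .inl ⟨hcB, hcT⟩⟩ ?_
    rintro a ⟨haS, ⟨haB, haT⟩ | ⟨haB, ha⟩⟩ b hbS hab <;> by_cases hbB : b ∈ B
    · exact .inl ⟨hbB, hT a ⟨⟨haS, haB⟩, haT⟩ b ⟨hbS, hbB⟩ hab⟩
    · exact .inr ⟨hbB, (hp a ⟨haS, hAB.symm.mem_right hab.symm hbB, haB⟩).1 haT⟩
    · exact .inl ⟨hbB, (hp b ⟨hbS, hAB.symm.mem_right hab haB, hbB⟩).2 ha⟩
    · exact .inr ⟨hbB, ha⟩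
  exact fun b hb => (hsub hb.1).elim And.right fun h => (h.1 hb.2).elim

lemma ConnectedOn.inter_of_subsingleton {S : Set V} (hS : ConnectedOn G S)
    (hAB : IsSeparation G A B) (hne : (S ∩ B).Nonempty) (hsub : (S ∩ (A ∩ B)).Subsingleton) :
    ConnectedOn G (S ∩ B) := by
  refine connectedOn_iff.2 ⟨hne, fun T hST hT => ?_⟩
  obtain hempty | ⟨t, ht⟩ := (S ∩ (A ∩ B)).eq_empty_or_nonempty
  · exact hS.inter_subset_of_closed (p := True) hAB
      (fun z hz => (Set.notMem_empty z (hempty ▸ hz)).elim) hST hT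
  · exact hS.inter_subset_of_closed (p := t ∈ T) hAB (fun z hz => by rw [hsub hz ht]) hST hT

lemma ConnectedOn.insert_apex {S : Set V} (hS : ConnectedOn G S) (hAB : IsSeparation G A B)
    (hx : x ∉ B) (hSZ : (S ∩ (A ∩ B)).Nonempty) :
    ConnectedOn (apexGraph G x (A ∩ B) B) (insert x (S ∩ B)) := by
  obtain ⟨z, hzS, hz⟩ := hSZ
  have hne : ∀ {c}, c ∈ B → c ≠ x := fun hc hcx => hx (hcx ▸ hc)
  have hadj : ∀ b ∈ A ∩ B, (apexGraph G x (A ∩ B) B).Adj x b := fun b hb =>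
    (apexGraph_adj_apex (fun h => hx h.2) hx).2 hb
  refine connectedOn_iff.2 ⟨⟨x, Set.mem_insert ..⟩, fun T hST hT => ?_⟩
  have hp : ∀ b ∈ S ∩ (A ∩ B), b ∈ T ↔ x ∈ T := fun b hb =>
    ⟨fun hbT => hT b ⟨.inr ⟨hb.1, hb.2.2⟩, hbT⟩ x (.inl rfl) (hadj b hb.2).symm,
      fun hxT => hT x ⟨.inl rfl, hxT⟩ b (.inr ⟨hb.1, hb.2.2⟩) (hadj b hb.2)⟩
  have hST' : (S ∩ B ∩ T).Nonempty := by
    obtain ⟨b, rfl | hb, hbT⟩ := hST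
    · exact ⟨z, ⟨hzS, hz.2⟩, (hp z ⟨hzS, hz⟩).2 hbT⟩
    · exact ⟨b, hb, hbT⟩
  have hsub : S ∩ B ⊆ T := hS.inter_subset_of_closed hAB hp hST' fun a ha b hb hab =>
    hT a ⟨.inr ha.1, ha.2⟩ b (.inr hb) <|
      (apexGraph_adj_of_ne (hne ha.1.2) (hne hb.2)).2 ⟨hab, ha.1.2, hb.2⟩
  exact Set.insert_subset ((hp z ⟨hzS, hz⟩).1 (hsub ⟨hzS, hz.2⟩)) hsub

namespace IsApexSeparation

lemma nonempty_inter_right (h : IsApexSeparation G x μ A B D)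
    (hJ : NonadjHasThreeCommonNeighbors J) (hμ : IsMinorModel J G μ) {w₀ : W}
    (hw₀ : Disjoint (μ w₀) A) (w : W) : (μ w ∩ B).Nonempty := by
  by_contra hno
  have hw : Disjoint (μ w) B := Set.disjoint_left.2 fun a ha haB => hno ⟨a, ha, haB⟩
  have hne : w ≠ w₀ := by
    rintro rfl
    obtain ⟨a, ha⟩ := (hμ.connected w).nonempty
    exact (h.cover a).elim (Set.disjoint_left.1 hw₀ ha) (Set.disjoint_left.1 hw ha)
  have hnadj : ¬ J.Adj w w₀ := fun hadj => by
    obtain ⟨a, ha, b, hb, hab⟩ := hμ.adj hadj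
    exact Set.disjoint_left.1 hw ha (h.mem_right hab.symm (Set.disjoint_left.1 hw₀ hb))
  obtain ⟨c, hc, hadj⟩ := hJ hne hnadj
  choose z hzc hz using fun i =>
    hμ.meets_separator_of_adj h.toIsSeparation hw hw₀ (hadj i).1 (hadj i).2
  obtain ⟨i, j, hij, hD⟩ := Fintype.exists_ne_map_eq_of_card_lt (fun i => (z i ∈ D : Prop))
    (by simp)
  by_cases hi : z i ∈ D
  · exact hij (hc (h.eq_of_meets ⟨z i, hzc i, hi⟩ ⟨z j, hzc j, hD ▸ hi⟩))
  · have hzz : z i = z j := h.subsingleton_diff ⟨hz i, hi⟩ ⟨hz j, hD ▸ hi⟩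
    exact hij (hc (eq_of_mem_of_mem hμ.disjoint (hzc i) (hzz ▸ hzc j)))

lemma mengerCondition [Finite V] (h : IsApexSeparation G x μ A B D) (hT : IsTied G x μ) {w₀ : W}
    (hw₀ : Disjoint (μ w₀) A) :
    MengerCondition (G.induce (A \ {x})).spanningCoe (G.neighborSet x) (A ∩ B) 3 := by
  intro A' B' hAB' hN hZ
  obtain ⟨hxA, hNA⟩ := Set.insert_subset_iff.1 h.closedNeighborSet_subset
  have hsep : IsSeparation G (insert x (A' ∩ A)) ((B' ∪ B) \ {x}) := by
    refine ⟨fun w => ?_, fun a b hab => ?_⟩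
    · have := h.cover w
      have := hAB'.cover w
      simp only [Set.mem_insert_iff, Set.mem_inter_iff, Set.mem_sdiff, Set.mem_union,
        Set.mem_singleton_iff]
      tauto
    by_cases hax : a = x
    · subst hax
      exact .inl ⟨.inl rfl, .inr ⟨hN hab, hNA hab⟩⟩
    by_cases hbx : b = x
    · subst hbx
      exact .inl ⟨.inr ⟨hN hab.symm, hNA hab.symm⟩, .inl rfl⟩
    obtain ⟨ha, hb⟩ | hB := h.adj hab
    · have hab' : (G.induce (A \ {x})).spanningCoe.Adj a b :=
        (map_adj ..).2 ⟨⟨a, ha, hax⟩, ⟨b, hb, hbx⟩, hab, rfl, rfl⟩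
      exact (hAB'.adj hab').imp (fun h => ⟨.inr ⟨h.1, ha⟩, .inr ⟨h.2, hb⟩⟩)
        fun h => ⟨⟨.inl h.1, hax⟩, .inl h.2, hbx⟩
    · exact .inr ⟨⟨.inr hB.1, hax⟩, .inr hB.2, hbx⟩
  have hsub : insert x (A' ∩ A) ∩ ((B' ∪ B) \ {x}) ⊆ A' ∩ B' := by
    rintro w ⟨hw | ⟨hwA', hwA⟩, hwB, hwx⟩
    · exact (hwx hw).elim
    · exact ⟨hwA', hwB.elim id fun hwB => hZ ⟨hwA, hwB⟩⟩
  exact (hT.three_le_ncard hsep (Set.insert_subset_insert fun y hy => ⟨hN hy, hNA hy⟩)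
    (hw₀.mono_right (Set.insert_subset hxA Set.inter_subset_right))).trans
      (Set.ncard_le_ncard hsub)

lemma neighborSet_apexGraph (h : IsApexSeparation G x μ A B D) :
    (apexGraph G x (A ∩ B) B).neighborSet x = A ∩ B :=
  Set.ext fun _ => apexGraph_adj_apex (fun hx => h.notMem_right hx.2) h.notMem_right

lemma nonempty_inter_separator (h : IsApexSeparation G x μ A B D) {w : W}
    (hw : (μ w ∩ D).Nonempty) : (μ w ∩ (A ∩ B)).Nonempty :=
  hw.mono (Set.inter_subset_inter_right _ h.subset_separator)

lemma apexBag_disjoint (h : IsApexSeparation G x μ A B D)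
    (hμ : Pairwise fun w w' => Disjoint (μ w) (μ w')) :
    Pairwise fun w w' => Disjoint (apexBag x B D μ w) (apexBag x B D μ w') := by
  intro w w' hww'
  have hdisj : Disjoint (μ w ∩ B) (μ w' ∩ B) :=
    (hμ hww').mono Set.inter_subset_left Set.inter_subset_left
  have hx : ∀ w, x ∉ μ w ∩ B := fun w hw => h.notMem_right hw.2
  simp only [apexBag]
  split_ifs with hw hw' hw'
  · exact (hww' (h.eq_of_meets hw hw')).elim
  · exact Set.disjoint_insert_left.2 ⟨hx w', hdisj⟩
  · exact Set.disjoint_insert_right.2 ⟨hx w, hdisj⟩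
  · exact hdisj

lemma inter_subset_apexBag (w : W) : μ w ∩ B ⊆ apexBag x B D μ w := by
  unfold apexBag
  split_ifs
  exacts [Set.subset_insert .., le_rfl]

lemma apex_mem_apexBag {w : W} (hw : (μ w ∩ D).Nonempty) : x ∈ apexBag x B D μ w := by
  simp [apexBag, hw]

lemma apexBag_connected (h : IsApexSeparation G x μ A B D) {w : W} (hw : ConnectedOn G (μ w))
    (hB : (μ w ∩ B).Nonempty) : ConnectedOn (apexGraph G x (A ∩ B) B) (apexBag x B D μ w) := by
  unfold apexBag
  split_ifs with hD
  · exact hw.insert_apex h.toIsSeparation h.notMem_right (h.nonempty_inter_separator hD)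
  · have hsub : (μ w ∩ (A ∩ B)).Subsingleton := h.subsingleton_diff.anti fun z hz =>
      ⟨hz.2, fun hzD => hD ⟨z, hz.1, hzD⟩⟩
    have hne : ∀ a ∈ μ w ∩ B, a ≠ x := fun a ha hax => h.notMem_right (hax ▸ ha.2)
    exact (hw.inter_of_subsingleton h.toIsSeparation hB hsub).mono_adj fun a ha b hb hab =>
      (apexGraph_adj_of_ne (hne a ha) (hne b hb)).2 ⟨hab, ha.2, hb.2⟩

lemma apexBag_adj (h : IsApexSeparation G x μ A B D) (hμ : IsMinorModel J G μ)
    (hB : ∀ w, (μ w ∩ B).Nonempty) {w w' : W} (hww' : J.Adj w w') :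
    ∃ a ∈ apexBag x B D μ w, ∃ b ∈ apexBag x B D μ w', (apexGraph G x (A ∩ B) B).Adj a b := by
  obtain ⟨a, ha, b, hb, hab⟩ := hμ.adj hww'
  have hx : ∀ {c}, c ∈ B → c ≠ x := fun hc hcx => h.notMem_right (hcx ▸ hc)
  obtain ⟨haA, hbA⟩ | ⟨haB, hbB⟩ := h.adj hab
  swap
  · exact ⟨a, inter_subset_apexBag w ⟨ha, haB⟩, b, inter_subset_apexBag w' ⟨hb, hbB⟩,
      (apexGraph_adj_of_ne (hx haB) (hx hbB)).2 ⟨hab, haB, hbB⟩⟩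
  obtain ⟨z, hzw, hz⟩ := (hμ.connected w).meets_separator h.toIsSeparation ⟨a, ha, haA⟩ (hB w)
  obtain ⟨z', hzw', hz'⟩ :=
    (hμ.connected w').meets_separator h.toIsSeparation ⟨b, hb, hbA⟩ (hB w')
  have hadj : ∀ {c}, c ∈ A ∩ B → (apexGraph G x (A ∩ B) B).Adj x c := fun hc =>
    h.neighborSet_apexGraph.superset hc
  by_cases hD : (μ w ∩ D).Nonempty
  · exact ⟨x, apex_mem_apexBag hD, z', inter_subset_apexBag w' ⟨hzw', hz'.2⟩, hadj hz'⟩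
  by_cases hD' : (μ w' ∩ D).Nonempty
  · exact ⟨z, inter_subset_apexBag w ⟨hzw, hz.2⟩, x, apex_mem_apexBag hD', (hadj hz).symm⟩
  obtain rfl : z = z' := h.subsingleton_diff ⟨hz, fun hzD => hD ⟨z, hzw, hzD⟩⟩
    ⟨hz', fun hzD => hD' ⟨z', hzw', hzD⟩⟩
  exact (hww'.ne (eq_of_mem_of_mem hμ.disjoint hzw hzw')).elim

lemma isMinorModel_apexBag (h : IsApexSeparation G x μ A B D) (hμ : IsMinorModel J G μ)
    (hB : ∀ w, (μ w ∩ B).Nonempty) :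
    IsMinorModel J (apexGraph G x (A ∩ B) B) (apexBag x B D μ) :=
  ⟨fun w => h.apexBag_connected (hμ.connected w) (hB w), h.apexBag_disjoint hμ.disjoint,
    fun _ _ hww' => h.apexBag_adj hμ hB hww'⟩

lemma isTied_apexBag [Finite V] (h : IsApexSeparation G x μ A B D)
    (hμ : ∀ w, ConnectedOn G (μ w)) (hB : ∀ w, (μ w ∩ B).Nonempty) (hT : IsTied G x μ) :
    IsTied (apexGraph G x (A ∩ B) B) x (apexBag x B D μ) := by
  intro A' B' hAB' hA' hcard w
  rw [h.neighborSet_apexGraph] at hA'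
  have hZA' : A ∩ B ⊆ A' := (Set.subset_insert ..).trans hA'
  have hsep : IsSeparation G (A ∪ A') (B ∩ B') := by
    refine ⟨fun a => ?_, fun a b hab => ?_⟩
    · have := h.cover a
      have := hAB'.cover a
      simp only [Set.mem_union, Set.mem_inter_iff]
      tauto
    obtain hA | ⟨ha, hb⟩ := h.adj hab
    · exact .inl ⟨.inl hA.1, .inl hA.2⟩
    · have hx : ∀ {c}, c ∈ B → c ≠ x := fun hc hcx => h.notMem_right (hcx ▸ hc)
      exact (hAB'.adj ((apexGraph_adj_of_ne (hx ha) (hx hb)).2 ⟨hab, ha, hb⟩)).imp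
        (fun h => ⟨.inr h.1, .inr h.2⟩) fun h => ⟨⟨ha, h.1⟩, hb, h.2⟩
  have hsub : (A ∪ A') ∩ (B ∩ B') ⊆ A' ∩ B' := by
    rintro a ⟨ha | ha, haB, haB'⟩
    exacts [⟨hZA' ⟨ha, haB⟩, haB'⟩, ⟨ha, haB'⟩]
  obtain ⟨a, ha, haA⟩ := hT _ _ hsep (h.closedNeighborSet_subset.trans Set.subset_union_left)
    ((Set.ncard_le_ncard hsub).trans hcard) w
  suffices (μ w ∩ B ∩ A').Nonempty from
    this.mono (Set.inter_subset_inter_left _ (inter_subset_apexBag w))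
  have hmeets : (μ w ∩ A).Nonempty → (μ w ∩ B ∩ A').Nonempty := fun hA => by
    obtain ⟨z, hzw, hz⟩ := (hμ w).meets_separator h.toIsSeparation hA (hB w)
    exact ⟨z, ⟨hzw, hz.2⟩, hZA' hz⟩
  obtain haA | haA' := haA
  · exact hmeets ⟨a, ha, haA⟩
  · obtain haA | haB := h.cover a
    exacts [hmeets ⟨a, ha, haA⟩, ⟨a, ⟨ha, haB⟩, haA'⟩]

lemma mem_support_of_mem_separator [Finite V] (h : IsApexSeparation G x μ A B D)
    (hT : IsTied G x μ) {w₀ : W} (hw₀ : Disjoint (μ w₀) A) {z : V} (hz : z ∈ A ∩ B) :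
    z ∈ G.support := by
  by_contra hiso
  have hadj : ∀ a b, G.Adj a b → a ≠ z := fun a b hab haz => hiso ⟨b, haz ▸ hab⟩
  have hsep : IsSeparation G (A \ {z}) B :=
    ⟨fun a => by
      by_cases ha : a = z
      · exact .inr (ha ▸ hz.2)
      · exact (h.cover a).imp_left fun hA => ⟨hA, ha⟩,
    fun a b hab => (h.adj hab).imp_left
      fun hA => ⟨⟨hA.1, hadj a b hab⟩, hA.2, hadj b a hab.symm⟩⟩
  have hx : insert x (G.neighborSet x) ⊆ A \ {z} := by
    refine fun a ha => ⟨h.closedNeighborSet_subset ha, ?_⟩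
    obtain rfl | ha := ha
    exacts [fun haz => h.notMem_right (haz ▸ hz.2), hadj a x ha.symm]
  have hlt : (A \ {z} ∩ B).ncard < (A ∩ B).ncard := Set.ncard_lt_ncard
    ⟨Set.inter_subset_inter_left _ Set.sdiff_subset, fun hsub => (hsub hz).1.2 rfl⟩
  have hge := hT.three_le_ncard hsep hx (hw₀.mono_right Set.sdiff_subset)
  exact (h.ncard_separator ▸ hlt).not_ge hge

lemma ncard_support_apexGraph_lt [Finite V] (h : IsApexSeparation G x μ A B D)
    (hT : IsTied G x μ) {w₀ : W} (hw₀ : Disjoint (μ w₀) A)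
    (hN : ¬ G.neighborSet x ⊆ A ∩ B) :
    (apexGraph G x (A ∩ B) B).support.ncard < G.support.ncard := by
  have hx : x ∉ A ∩ B := fun hx => h.notMem_right hx.2
  obtain ⟨y, hxy, hy⟩ := Set.not_subset.1 hN
  refine Set.ncard_lt_ncard ⟨fun p ⟨q, hpq⟩ => ?_, fun hsub => ?_⟩
  · replace hpq : (apexGraph G x (A ∩ B) B).Adj p q := hpq
    by_cases hp : p = x
    · exact ⟨y, hp ▸ hxy⟩
    by_cases hq : q = x
    · exact h.mem_support_of_mem_separator hT hw₀
        ((apexGraph_adj_apex hx h.notMem_right).1 (hq ▸ Adj.symm hpq))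
    · exact ⟨q, ((apexGraph_adj_of_ne hp hq).1 hpq).1⟩
  · obtain ⟨q, hyq : (apexGraph G x (A ∩ B) B).Adj y q⟩ := hsub ⟨x, hxy.symm⟩
    by_cases hq : q = x
    · exact hy ((apexGraph_adj_apex hx h.notMem_right).1 (hq ▸ Adj.symm hyq))
    · exact hy ⟨h.closedNeighborSet_subset (.inr hxy),
        ((apexGraph_adj_of_ne hxy.ne' hq).1 hyq).2.1⟩

end IsApexSeparation

lemma ConnectedOn.of_apexGraph {S Z : Set V} (hS : ConnectedOn (apexGraph G x Z B) S)
    (hx : x ∉ S) : ConnectedOn G S :=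
  hS.mono_adj fun _ ha _ hb hab =>
    ((apexGraph_adj_of_ne (ne_of_mem_of_not_mem ha hx) (ne_of_mem_of_not_mem hb hx)).1 hab).1

lemma ConnectedOn.subset_of_apexGraph {S Z : Set V} (hS : ConnectedOn (apexGraph G x Z B) S)
    (hx : x ∉ S) (hB : (S ∩ B).Nonempty) : S ⊆ B :=
  hS.subset_of_closed hB fun _ ha _ hb hab =>
    ((apexGraph_adj_of_ne (ne_of_mem_of_not_mem ha.1 hx) (ne_of_mem_of_not_mem hb hx)).1 hab).2.2

lemma exists_adj_of_apexGraph {S T Z : Set V} (hS : x ∉ S) (hT : x ∉ T)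
    (h : ∃ a ∈ S, ∃ c ∈ T, (apexGraph G x Z B).Adj a c) :
    ∃ a ∈ S ∩ B, ∃ c ∈ T, G.Adj a c := by
  obtain ⟨a, ha, c, hc, hac⟩ := h
  obtain ⟨hac, haB, -⟩ :=
    (apexGraph_adj_of_ne (ne_of_mem_of_not_mem ha hS) (ne_of_mem_of_not_mem hc hT)).1 hac
  exact ⟨a, ⟨ha, haB⟩, c, hc, hac⟩

lemma IsApexSeparation.exists_linkage_endpoints [Finite V] (h : IsApexSeparation G x μ A B D)
    {P : Fin 3 → Set V}
    (hP : IsLinkage (G.induce (A \ {x})).spanningCoe (G.neighborSet x) (A ∩ B) P) :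
    (∀ i, x ∉ P i) ∧ ∃ z : Fin 3 → V, (∀ i, z i ∈ P i) ∧ Set.range z = A ∩ B ∧
      ∀ i, ∀ a ∈ P i, a ∈ B → a = z i := by
  have hPA : ∀ i, P i ⊆ A \ {x} := fun i => (hP.connected i).subset_of_spanningCoe <| by
    obtain ⟨y, hy, hxy⟩ := hP.meets_left i
    exact ⟨y, hy, h.closedNeighborSet_subset (.inr hxy), hxy.ne'⟩
  obtain ⟨z, hzP, -, hz⟩ := hP.exists_endpoints h.ncard_separator.le
  refine ⟨fun i hx => (hPA i hx).2 rfl, z, hzP, hz, fun i a ha haB => ?_⟩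
  obtain ⟨j, rfl⟩ : a ∈ Set.range z := hz ▸ ⟨(hPA i ha).1, haB⟩
  rw [eq_of_mem_of_mem hP.disjoint ha (hzP j)]

lemma IsApexSeparation.hasRootedK23 [Finite V] (h : IsApexSeparation G x μ A B D)
    {P : Fin 3 → Set V}
    (hP : IsLinkage (G.induce (A \ {x})).spanningCoe (G.neighborSet x) (A ∩ B) P)
    (hK : HasRootedK23 (apexGraph G x (A ∩ B) B) x) : HasRootedK23 G x := by
  obtain ⟨S, C, hSC⟩ := hK
  obtain ⟨hxP, z, hzP, hz, hPB⟩ := h.exists_linkage_endpoints hP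
  have hzB : ∀ i, z i ∈ B := fun i => Set.inter_subset_right (hz ▸ Set.mem_range_self i)
  have hroot : ∀ i, ∃ k, z k ∈ C i := fun i => by
    obtain ⟨y, hy, hxy⟩ := hSC.rooted i
    obtain ⟨k, rfl⟩ : y ∈ Set.range z := hz ▸ h.neighborSet_apexGraph.subset hxy
    exact ⟨k, hy⟩
  choose k hk using hroot
  have hCB : ∀ i, C i ⊆ B := fun i =>
    (hSC.connected_right i).subset_of_apexGraph (hSC.notMem_right i) ⟨_, hk i, hzB _⟩
  have hadj : ∀ j i, ∃ a ∈ S j ∩ B, ∃ c ∈ C i, G.Adj a c := fun j i =>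
    exists_adj_of_apexGraph (hSC.notMem_left j) (hSC.notMem_right i) (hSC.adj j i)
  have hSB : ∀ j, S j ⊆ B := fun j => (hSC.connected_left j).subset_of_apexGraph
    (hSC.notMem_left j) (let ⟨a, ha, _⟩ := hadj j 0; ⟨a, ha⟩)
  have hP' : IsLinkage G (G.neighborSet x) (A ∩ B) P :=
    hP.mono_graph (G.spanningCoe_induce_le _)
  have hdisj : ∀ {T : Set V} i, T ⊆ B → Disjoint T (C i) → Disjoint T (P (k i)) := fun i hT hd =>
    Set.disjoint_left.2 fun a ha haP =>
      Set.disjoint_left.1 hd ha (hPB _ a haP (hT ha) ▸ hk i)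
  refine ⟨S, fun i => C i ∪ P (k i), fun j => (hSC.connected_left j).of_apexGraph
    (hSC.notMem_left j), fun i => ((hSC.connected_right i).of_apexGraph (hSC.notMem_right i)).union
      (hP'.connected _) ⟨z (k i), hk i, hzP _⟩, hSC.notMem_left, fun i hx => ?_,
    hSC.disjoint_left, fun i i' hii' => ?_,
    fun j i => Set.disjoint_union_right.2 ⟨hSC.disjoint j i, hdisj i (hSB j) (hSC.disjoint j i)⟩,
    fun i => ?_, fun j i => ?_⟩
  · exact hx.elim (hSC.notMem_right i) (hxP _)
  · have hC := hSC.disjoint_right hii'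
    have hkk : k i ≠ k i' := fun he => Set.disjoint_left.1 hC (hk i) (he ▸ hk i')
    exact Set.disjoint_union_left.2
      ⟨Set.disjoint_union_right.2 ⟨hC, hdisj i' (hCB i) hC⟩,
        Set.disjoint_union_right.2 ⟨(hdisj i (hCB i') hC.symm).symm, hP.disjoint hkk⟩⟩
  · obtain ⟨y, hy, hxy⟩ := hP.meets_left (k i)
    exact ⟨y, .inr hy, hxy⟩
  · obtain ⟨a, ha, c, hc, hac⟩ := hadj j i
    exact ⟨a, ha.1, c, .inl hc, hac⟩

/-- No edge can be contracted: every edge that avoids `x` joins two different bags or two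
neighbours of `x`. -/
def IsIrreducible (G : SimpleGraph V) (x : V) (μ : W → Set V) : Prop :=
  ∀ ⦃u v⦄, G.Adj u v → u ≠ x → v ≠ x → ¬ (G.Adj x u ∧ G.Adj x v) →
    ∃ w w', w ≠ w' ∧ u ∈ μ w ∧ v ∈ μ w'

lemma exists_contractible_edge (h : ¬ IsIrreducible G x μ) :
    ∃ u v, G.Adj u v ∧ u ≠ x ∧ v ≠ x ∧ ¬ G.Adj x v ∧ ∀ ⦃w w'⦄, u ∈ μ w → v ∈ μ w' → w = w' := by
  simp only [IsIrreducible, not_forall, not_exists, not_and, exists_prop] at h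
  obtain ⟨u, v, huv, hu, hv, hx, hbag⟩ := h
  by_cases hxv : G.Adj x v
  · exact ⟨v, u, huv.symm, hv, hu, fun hxu => hx hxu hxv, fun w w' hw hw' =>
      by_contra fun hne => hbag w' w (Ne.symm hne) hw' hw⟩
  · exact ⟨u, v, huv, hu, hv, hxv, fun w w' hw hw' => by_contra fun hne => hbag w w' hne hw hw'⟩

lemma IsMinorModel.eq_of_meets_pair (hμ : IsMinorModel J G μ) {u v : V}
    (huv : ∀ ⦃w w'⦄, u ∈ μ w → v ∈ μ w' → w = w') ⦃w w' : W⦄ (hw : (μ w ∩ {u, v}).Nonempty)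
    (hw' : (μ w' ∩ {u, v}).Nonempty) : w = w' := by
  obtain ⟨a, ha, rfl | rfl⟩ := hw <;> obtain ⟨b, hb, rfl | rfl⟩ := hw'
  exacts [eq_of_mem_of_mem hμ.disjoint ha hb, huv ha hb, (huv hb ha).symm,
    eq_of_mem_of_mem hμ.disjoint ha hb]

lemma neighborSet_contractEdge {u v : V} (huv : G.Adj u v) (hu : u ≠ x) (hv : v ≠ x)
    (hxv : ¬ G.Adj x v) : (contractEdge G u v).neighborSet x = G.neighborSet x := by
  have h := (isContraction_contractEdge huv).neighborSet fun a ha => eq_of_contractMap_eq hu hv ha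
  rw [contractMap_of_ne hv.symm] at h
  have hfix : Set.EqOn (contractMap u v) id (G.neighborSet x) := fun y hy =>
    contractMap_of_ne (ne_of_mem_of_not_mem hy hxv)
  rw [h, hfix.image_eq, Set.image_id]

/- A separation witnessing that tiedness is lost has the contracted vertex in its separator, which
therefore grows by one when that vertex is split into `u` and `v` again. -/
lemma exists_isApexSeparation_of_contract [Finite V] (hμ : IsMinorModel J G μ) (hT : IsTied G x μ)
    {u v : V} (huv : G.Adj u v) (hu : u ≠ x) (hv : v ≠ x) (hxv : ¬ G.Adj x v)
    (hbag : ∀ ⦃w w'⦄, u ∈ μ w → v ∈ μ w' → w = w')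
    (hT' : ¬ IsTied (contractEdge G u v) x fun w => contractMap u v '' μ w) :
    ∃ A B w₀, IsApexSeparation G x μ A B {u, v} ∧ Disjoint (μ w₀) A := by
  simp only [IsTied, not_forall, neighborSet_contractEdge huv hu hv hxv] at hT'
  obtain ⟨A, B, hAB, hxA, hcard, w₀, hw₀⟩ := hT'
  set φ := contractMap u v
  have hxA' : insert x (G.neighborSet x) ⊆ φ ⁻¹' A := fun a ha => by
    have hav : a ≠ v := by rintro rfl; exact ha.elim hv hxv
    rw [Set.mem_preimage, show φ a = a from contractMap_of_ne hav]
    exact hxA ha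
  have hsep : IsSeparation G (φ ⁻¹' A) (φ ⁻¹' B \ {x}) :=
    ((isContraction_contractEdge huv).isSeparation_preimage hAB).diff_singleton hxA'
  have hw₀A : Disjoint (μ w₀) (φ ⁻¹' A) := Set.disjoint_left.2 fun a ha haA =>
    hw₀ ⟨φ a, ⟨a, ha, rfl⟩, haA⟩
  have hge := hT.three_le_ncard hsep hxA' hw₀A
  have hsub : φ ⁻¹' A ∩ (φ ⁻¹' B \ {x}) ⊆ φ ⁻¹' (A ∩ B) := fun a ha => ⟨ha.1, ha.2.1⟩
  have huZ : u ∈ A ∩ B := by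
    by_contra huZ
    have := Set.ncard_le_ncard (hsub.trans (preimage_contractMap_subset huZ))
    omega
  have hle := Set.ncard_le_ncard (hsub.trans (preimage_contractMap_subset_insert u v _))
  have hinsert := Set.ncard_insert_le v (A ∩ B)
  have huvZ : {u, v} ⊆ φ ⁻¹' A ∩ (φ ⁻¹' B \ {x}) := by
    have hφu : φ u = u := contractMap_of_ne huv.ne
    have hφv : φ v = u := contractMap_self u v
    rintro a (rfl | rfl) <;> simp_all
  refine ⟨_, _, w₀, ⟨hsep, hxA', fun h => h.2 rfl, by omega, huvZ, hμ.eq_of_meets_pair hbag,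
    Set.ncard_le_one_iff_subsingleton.1 ?_⟩, hw₀A⟩
  rw [Set.ncard_sdiff huvZ, Set.ncard_pair huv.ne]
  omega

theorem hasRootedK23_of_irreducible [Finite V] (hJ : NonadjHasThreeCommonNeighbors J)
    (hirr : ∀ (G : SimpleGraph V) (μ : W → Set V), (G.neighborSet x).ncard = 3 →
      IsMinorModel J G μ → IsTied G x μ → IsIrreducible G x μ → HasRootedK23 G x)
    (hN : (G.neighborSet x).ncard = 3) (hμ : IsMinorModel J G μ) (hT : IsTied G x μ) :
    HasRootedK23 G x := by
  induction hn : G.support.ncard using Nat.strong_induction_on generalizing G μ with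
  | _ n ih =>
  by_cases hir : IsIrreducible G x μ
  · exact hirr G μ hN hμ hT hir
  obtain ⟨u, v, huv, hu, hv, hxv, hbag⟩ := exists_contractible_edge hir
  by_cases hT' : IsTied (contractEdge G u v) x fun w => contractMap u v '' μ w
  · have hφ := isContraction_contractEdge huv
    refine hφ.hasRootedK23 (fun a ha => eq_of_contractMap_eq hu hv ha) ?_
    rw [contractMap_of_ne hv.symm]
    refine ih _ (hn ▸ ncard_support_contractEdge_lt huv)
      (by rwa [neighborSet_contractEdge huv hu hv hxv])
      (hφ.isMinorModel_image hμ fun w w' a b ha hb hab => ?_) hT' rfl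
    obtain rfl | ⟨rfl, rfl⟩ | ⟨rfl, rfl⟩ := contractMap_eq_iff.1 hab
    exacts [eq_of_mem_of_mem hμ.disjoint ha hb, hbag ha hb, (hbag hb ha).symm]
  · obtain ⟨A, B, w₀, h, hw₀⟩ := exists_isApexSeparation_of_contract hμ hT huv hu hv hxv hbag hT'
    have hB := h.nonempty_inter_right hJ hμ hw₀
    obtain ⟨P, hP⟩ := (h.mengerCondition hT hw₀).exists_linkage
    have hsub : ¬ G.neighborSet x ⊆ A ∩ B := fun hsub => hxv <|
      Set.eq_of_subset_of_ncard_le hsub (by rw [hN, h.ncard_separator]) |>.superset <|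
        h.subset_separator (.inr rfl)
    exact h.hasRootedK23 hP (ih _ (hn ▸ h.ncard_support_apexGraph_lt hT hw₀ hsub)
      (by rw [h.neighborSet_apexGraph, h.ncard_separator]) (h.isMinorModel_apexBag hμ hB)
      (h.isTied_apexBag hμ.connected hB hT) rfl)

end ApexReduction

section Attachments

variable {W : Type*} {J : SimpleGraph W} {β : Fin 3 → W} {E : Fin 3 → W → Prop}

/-- The combinatorial trace of an irreducible model at `x`: the neighbour `y i` of `x` lies in the
bag `β i`, the bags outside the range of `β` are single vertices, and `E i w` says that `y i` is
adjacent to the vertex forming the bag `w`. -/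
structure IsAttachment (J : SimpleGraph W) (β : Fin 3 → W) (E : Fin 3 → W → Prop) : Prop where
  notMem_range : ∀ ⦃i w⦄, E i w → w ∉ Set.range β
  attached : ∀ ⦃w i⦄, w ∉ Set.range β → J.Adj w (β i) → ∃ j, β j = β i ∧ E j w
  matching : ¬ Function.Injective β → ∃ m : Fin 3 → W, Function.Injective m ∧ ∀ i, E i (m i)

/-- `L` is a path, possibly empty, whose first vertex is attached to `y i`. -/
def IsLeg (J : SimpleGraph W) (E : Fin 3 → W → Prop) (i : Fin 3) (L : List W) : Prop :=
  L.IsChain J.Adj ∧ ∀ t ∈ L.head?, E i t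

/-- `p` is attached to `y i` or to a vertex of the leg `L` at `y i`. -/
def Touches (J : SimpleGraph W) (E : Fin 3 → W → Prop) (p : W) (i : Fin 3) (L : List W) : Prop :=
  E i p ∨ ∃ t ∈ L, J.Adj p t

/-- The trace of a rooted `K₂,₃`: the two vertices `p` and `q` form its left side, and `y i`
together with the leg `L i` is the `i`-th bag on the right. -/
structure IsLeggedPair (J : SimpleGraph W) (β : Fin 3 → W) (E : Fin 3 → W → Prop) (p q : W)
    (L : Fin 3 → List W) : Prop where
  ne : p ≠ q
  left_notMem_range : p ∉ Set.range β
  right_notMem_range : q ∉ Set.range β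
  leg_notMem_range : ∀ i, ∀ t ∈ L i, t ∉ Set.range β
  left_notMem : ∀ i, p ∉ L i
  right_notMem : ∀ i, q ∉ L i
  disjoint : Pairwise fun i j => (L i).Disjoint (L j)
  isLeg : ∀ i, IsLeg J E i (L i)
  left_touches : ∀ i, Touches J E p i (L i)
  right_touches : ∀ i, Touches J E q i (L i)

/-- Some pair of vertices and some legs form the trace of a rooted `K₂,₃`. -/
def HasLeggedPair (J : SimpleGraph W) (β : Fin 3 → W) (E : Fin 3 → W → Prop) : Prop :=
  ∃ p q L, IsLeggedPair J β E p q L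

lemma fin_three_cases {i j k : Fin 3} (hij : i ≠ j) (hik : i ≠ k) (hjk : j ≠ k) (l : Fin 3) :
    l = i ∨ l = j ∨ l = k := by
  grind

lemma hasLeggedPair_of_lists {i j k : Fin 3} (hij : i ≠ j) (hik : i ≠ k) (hjk : j ≠ k) (p q : W)
    (L₁ L₂ L₃ : List W) (hL : (p :: q :: (L₁ ++ L₂ ++ L₃)).Nodup)
    (hβ : ∀ t ∈ p :: q :: (L₁ ++ L₂ ++ L₃), t ∉ Set.range β)
    (h₁ : IsLeg J E i L₁ ∧ Touches J E p i L₁ ∧ Touches J E q i L₁)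
    (h₂ : IsLeg J E j L₂ ∧ Touches J E p j L₂ ∧ Touches J E q j L₂)
    (h₃ : IsLeg J E k L₃ ∧ Touches J E p k L₃ ∧ Touches J E q k L₃) : HasLeggedPair J β E := by
  have := fin_three_cases hij hik hjk
  refine ⟨p, q, fun l => if l = i then L₁ else if l = j then L₂ else L₃, ?_⟩
  constructor <;> grind [Pairwise, List.Disjoint]

lemma isLeg_and_touches_nil {i : Fin 3} {p q : W} (hp : E i p) (hq : E i q) :
    IsLeg J E i [] ∧ Touches J E p i [] ∧ Touches J E q i [] := by
  simp [IsLeg, Touches, hp, hq]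

lemma isLeg_and_touches_singleton {i : Fin 3} {p q t : W} (ht : E i t) (hp : E i p ∨ J.Adj p t)
    (hq : E i q ∨ J.Adj q t) :
    IsLeg J E i [t] ∧ Touches J E p i [t] ∧ Touches J E q i [t] := by
  simp [IsLeg, Touches, ht, hp, hq]

lemma isLeg_and_touches_pair {i : Fin 3} {p q t u : W} (ht : E i t) (htu : J.Adj t u)
    (hp : J.Adj p t ∨ J.Adj p u) (hq : J.Adj q t ∨ J.Adj q u) :
    IsLeg J E i [t, u] ∧ Touches J E p i [t, u] ∧ Touches J E q i [t, u] := by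
  simp [IsLeg, Touches, ht, htu, hp, hq]

lemma range_eq_triple {i j k : Fin 3} (hij : i ≠ j) (hik : i ≠ k) (hjk : j ≠ k) :
    Set.range β = {β i, β j, β k} := by
  refine Set.Subset.antisymm ?_ (by rintro w (rfl | rfl | rfl) <;> exact ⟨_, rfl⟩)
  rintro w ⟨l, rfl⟩
  obtain rfl | rfl | rfl := fin_three_cases hij hik hjk l <;> simp

lemma range_eq_pair {i j k : Fin 3} (hij : i ≠ j) (hik : i ≠ k) (hjk : j ≠ k)
    (hβ : β i = β j) : Set.range β = {β i, β k} := by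
  rw [range_eq_triple hij hik hjk, hβ, Set.insert_eq_of_mem (Set.mem_insert _ _)]

namespace IsAttachment

lemma rel_of_injective (h : IsAttachment J β E) (hβ : Function.Injective β) {w : W} {i : Fin 3}
    (hw : w ∉ Set.range β) (hwi : J.Adj w (β i)) : E i w := by
  obtain ⟨j, hj, hE⟩ := h.attached hw hwi
  exact hβ hj ▸ hE

variable {i j k : Fin 3}

lemma rel_of_pair_left (h : IsAttachment J β E) (hij : i ≠ j) (hik : i ≠ k) (hjk : j ≠ k)
    (hβ : β i ≠ β k) {w : W} (hw : w ∉ Set.range β) (hwi : J.Adj w (β i)) : E i w ∨ E j w := by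
  obtain ⟨l, hl, hE⟩ := h.attached hw hwi
  have := fin_three_cases hij hik hjk l
  grind

lemma rel_of_pair_right (h : IsAttachment J β E) (hij : i ≠ j) (hik : i ≠ k) (hjk : j ≠ k)
    (hβij : β i = β j) (hβ : β i ≠ β k) {w : W} (hw : w ∉ Set.range β) (hwk : J.Adj w (β k)) :
    E k w := by
  obtain ⟨l, hl, hE⟩ := h.attached hw hwk
  have := fin_three_cases hij hik hjk l
  grind

end IsAttachment

lemma injective_or_pair_or_const (β : Fin 3 → W) : Function.Injective β ∨
    (∃ i j k : Fin 3, i ≠ j ∧ i ≠ k ∧ j ≠ k ∧ β i = β j ∧ β i ≠ β k) ∨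
    ∃ a, Set.range β = {a} := by
  refine or_iff_not_imp_left.2 fun hβ => ?_
  obtain ⟨i, j, hβij, hij⟩ := Function.not_injective_iff.1 hβ
  obtain ⟨k, hik, hjk⟩ := (by decide : ∀ i j : Fin 3, ∃ k, i ≠ k ∧ j ≠ k) i j
  by_cases hβik : β i = β k
  · exact .inr ⟨β i, by rw [range_eq_pair hij hik hjk hβij, hβik, Set.pair_eq_singleton]⟩
  · exact .inl ⟨i, j, k, hij, hik, hjk, hβij, hβik⟩

lemma K5_adj_iff {a b : Fin 5} : K5.Adj a b ↔ a ≠ b := Iff.rfl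

lemma exists_notMem_insert_range {f : Fin 3 → Fin 5} (hf : Function.Injective f) (a : Fin 5) :
    ∃ w, w ∉ insert a (Set.range f) := by
  refine (Set.ne_univ_iff_exists_notMem _).1 fun h => ?_
  have hle := Set.ncard_insert_le a (Set.range f)
  simp [h, Set.ncard_range_of_injective hf] at hle

section K5

variable {β : Fin 3 → Fin 5} {E : Fin 3 → Fin 5 → Prop}

namespace IsAttachment

lemma hasLeggedPair_K5_of_injective (h : IsAttachment K5 β E) (hβ : Function.Injective β) :
    HasLeggedPair K5 β E := by
  obtain ⟨p, hp⟩ := exists_notMem_insert_range hβ (β 0)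
  obtain ⟨q, hq⟩ := exists_notMem_insert_range hβ p
  have hE : ∀ {w}, w ∉ Set.range β → ∀ i, E i w := fun {w} hw i =>
    h.rel_of_injective hβ hw fun hwi => hw ⟨i, hwi.symm⟩
  refine ⟨p, q, fun _ => [], ?_⟩
  constructor <;> grind [Pairwise, List.Disjoint, IsLeg, Touches]

lemma hasLeggedPair_K5_of_pair (h : IsAttachment K5 β E) {i j k : Fin 3} (hij : i ≠ j)
    (hik : i ≠ k) (hjk : j ≠ k) (hβij : β i = β j) (hβik : β i ≠ β k) : HasLeggedPair K5 β E := by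
  obtain ⟨m, hm, hEm⟩ := h.matching fun hβ => hij (hβ hβij)
  have hmβ : ∀ l, m l ∉ Set.range β := fun l => h.notMem_range (hEm l)
  have hk : ∀ l, E k (m l) := fun l =>
    h.rel_of_pair_right hij hik hjk hβij hβik (hmβ l) fun hl => hmβ l ⟨k, hl.symm⟩
  have key : ∀ {i j}, i ≠ j → i ≠ k → j ≠ k → E i (m k) → HasLeggedPair K5 β E := by
    intro i j hij hik hjk hE
    have hmij : m i ≠ m j := hm.ne hij
    have hmik : m i ≠ m k := hm.ne hik
    have hmjk : m j ≠ m k := hm.ne hjk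
    apply hasLeggedPair_of_lists hij hik hjk (m i) (m k) [] [m j] [] <;>
      grind [IsLeg, Touches, K5_adj_iff]
  obtain hE | hE := h.rel_of_pair_left hij hik hjk hβik (hmβ k) fun hi => hmβ k ⟨i, hi.symm⟩
  · exact key hij hik hjk hE
  · exact key hij.symm hjk hik hE

lemma hasLeggedPair_K5_of_const (h : IsAttachment K5 β E) {a : Fin 5} (hβ : Set.range β = {a}) :
    HasLeggedPair K5 β E := by
  have hβa : ∀ i, β i = a := fun i => hβ.subset ⟨i, rfl⟩
  obtain ⟨m, hm, hEm⟩ := h.matching fun h01 => by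
    exact absurd (h01 ((hβa 0).trans (hβa 1).symm)) (by decide)
  have hma : ∀ l, m l ≠ a := fun l hl => h.notMem_range (hEm l) (hβ.superset hl)
  obtain ⟨e, he⟩ := exists_notMem_insert_range hm a
  obtain ⟨i, -, hi⟩ := h.attached (w := e) (i := 0) (by grind) (by grind [K5_adj_iff])
  obtain ⟨j, k, hij, hik, hjk⟩ :=
    (by decide : ∀ i : Fin 3, ∃ j k, i ≠ j ∧ i ≠ k ∧ j ≠ k) i
  have hmij : m i ≠ m j := hm.ne hij
  have hmik : m i ≠ m k := hm.ne hik
  have hmjk : m j ≠ m k := hm.ne hjk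
  apply hasLeggedPair_of_lists hij hik hjk (m i) e [] [m j] [m k] <;>
    grind [IsLeg, Touches, K5_adj_iff]

theorem hasLeggedPair_K5 (h : IsAttachment K5 β E) : HasLeggedPair K5 β E := by
  obtain hβ | ⟨i, j, k, hij, hik, hjk, hβij, hβik⟩ | ⟨a, ha⟩ := injective_or_pair_or_const β
  · exact h.hasLeggedPair_K5_of_injective hβ
  · exact h.hasLeggedPair_K5_of_pair hij hik hjk hβij hβik
  · exact h.hasLeggedPair_K5_of_const ha

end IsAttachment

end K5

section K33

/-- The colour class of a vertex of `K₃,₃`. -/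
def side (w : Fin 3 ⊕ Fin 3) : Bool := w.isRight

lemma K33_adj_iff {a b : Fin 3 ⊕ Fin 3} : K33.Adj a b ↔ side a ≠ side b := by
  cases a <;> cases b <;> simp [K33, side]

lemma side_eq_of_adj {a b c : Fin 3 ⊕ Fin 3} (hab : K33.Adj a b) (hac : K33.Adj a c) :
    side b = side c := by
  rw [K33_adj_iff] at hab hac
  rw [Bool.eq_not_of_ne hab.symm, Bool.eq_not_of_ne hac.symm]

lemma K33_adj_of_side_eq {a b c : Fin 3 ⊕ Fin 3} (hab : K33.Adj a b) (hc : side c = side b) :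
    K33.Adj a c :=
  K33_adj_iff.2 (hc ▸ K33_adj_iff.1 hab)

lemma exists_side_eq (a : Fin 3 ⊕ Fin 3) : ∃ b, b ≠ a ∧ side b = side a := by
  decide +revert

lemma exists_third_side_eq (a b : Fin 3 ⊕ Fin 3) (hab : a ≠ b) (hside : side a = side b) :
    ∃ c, c ≠ a ∧ c ≠ b ∧ side c = side a ∧
      ∀ w : Fin 3 ⊕ Fin 3, side w = side a → w = a ∨ w = b ∨ w = c := by
  decide +revert

variable {β : Fin 3 → Fin 3 ⊕ Fin 3} {E : Fin 3 → Fin 3 ⊕ Fin 3 → Prop} {i j k : Fin 3}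
  {a p q r : Fin 3 ⊕ Fin 3}

lemma hasLeggedPair_K33_of_const_of_three (hβ : Set.range β = {a}) (hij : i ≠ j) (hik : i ≠ k)
    (hjk : j ≠ k) (hpq : p ≠ q) (hpr : p ≠ r) (hqr : q ≠ r) (hp : E i p) (hq : E j q) (hr : E k r)
    (hap : K33.Adj a p) (haq : K33.Adj a q) (har : K33.Adj a r) : HasLeggedPair K33 β E := by
  obtain ⟨b, hba, hb⟩ := exists_side_eq a
  obtain ⟨c, hcb, hca, hc, -⟩ := exists_third_side_eq b a hba hb
  have hadj : ∀ {s}, K33.Adj a s → K33.Adj b s ∧ K33.Adj c s ∧ s ≠ a ∧ s ≠ b ∧ s ≠ c := by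
    grind [K33_adj_iff]
  refine hasLeggedPair_of_lists hij hik hjk b c [p] [q] [r] (by grind) (by grind)
    (isLeg_and_touches_singleton hp ?_ ?_) (isLeg_and_touches_singleton hq ?_ ?_)
    (isLeg_and_touches_singleton hr ?_ ?_) <;> grind

namespace IsAttachment

lemma exists_rel_of_const (h : IsAttachment K33 β E) (hβ : Set.range β = {a})
    (hap : K33.Adj a p) : ∃ l, E l p := by
  have hβa : β 0 = a := hβ.subset ⟨0, rfl⟩
  obtain ⟨l, -, hl⟩ := h.attached (w := p) (i := 0) (hβ ▸ hap.ne') (hβa ▸ hap.symm)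
  exact ⟨l, hl⟩

lemma ne_of_const (h : IsAttachment K33 β E) (hβ : Set.range β = {a}) (hp : E i p) : p ≠ a :=
  fun hpa => h.notMem_range hp (hβ.superset hpa)

lemma hasLeggedPair_K33_of_const_of_two (h : IsAttachment K33 β E) (hβ : Set.range β = {a})
    (hij : i ≠ j) (hik : i ≠ k) (hjk : j ≠ k) (hqr : q ≠ r) (hp : E i p) (hq : E j q) (hr : E k r)
    (hap : side p = side a) (haq : K33.Adj a q) (har : K33.Adj a r) : HasLeggedPair K33 β E := by
  have hpa : p ≠ a := h.ne_of_const hβ hp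
  obtain ⟨t, htq, htr, htside, -⟩ := exists_third_side_eq q r hqr (side_eq_of_adj haq har)
  obtain ⟨u, hup, hua, huside, -⟩ := exists_third_side_eq p a hpa hap
  have hat : K33.Adj a t := K33_adj_of_side_eq haq htside
  have hadj : ∀ {s}, K33.Adj a s → K33.Adj s p ∧ K33.Adj s u ∧ s ≠ a ∧ s ≠ p ∧ s ≠ u := by
    grind [K33_adj_iff]
  obtain ⟨l, hl⟩ := h.exists_rel_of_const hβ hat
  obtain rfl | rfl | rfl := fin_three_cases hij hik hjk l
  · exact hasLeggedPair_K33_of_const_of_three hβ hij hik hjk htq htr hqr hl hq hr hat haq har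
  · refine hasLeggedPair_of_lists hij hik hjk q t [p] [] [r, u] (by grind) (by grind)
      (isLeg_and_touches_singleton hp ?_ ?_) (isLeg_and_touches_nil hq hl)
      (isLeg_and_touches_pair hr ?_ ?_ ?_) <;> grind
  · refine hasLeggedPair_of_lists hik hij hjk.symm r t [p] [] [q, u] (by grind) (by grind)
      (isLeg_and_touches_singleton hp ?_ ?_) (isLeg_and_touches_nil hr hl)
      (isLeg_and_touches_pair hq ?_ ?_ ?_) <;> grind

lemma hasLeggedPair_K33_of_const_of_one (h : IsAttachment K33 β E) (hβ : Set.range β = {a})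
    (hij : i ≠ j) (hik : i ≠ k) (hjk : j ≠ k) (hpq : p ≠ q) (hp : E i p) (hq : E j q) (hr : E k r)
    (hap : side p = side a) (haq : side q = side a) (har : K33.Adj a r) :
    HasLeggedPair K33 β E := by
  obtain ⟨t, htr, htside⟩ := exists_side_eq r
  obtain ⟨u, hut, hur, huside, -⟩ := exists_third_side_eq t r htr htside
  have hat : K33.Adj a t := K33_adj_of_side_eq har htside
  have hau : K33.Adj a u := K33_adj_of_side_eq hat huside
  have of_ne : ∀ {s l}, s ≠ r → K33.Adj a s → E l s → l ≠ k → HasLeggedPair K33 β E := by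
    intro s l hsr has hl hlk
    obtain rfl | rfl | rfl := fin_three_cases hij hik hjk l
    · exact h.hasLeggedPair_K33_of_const_of_two hβ hij.symm hjk hik hsr hq hl hr haq has har
    · exact h.hasLeggedPair_K33_of_const_of_two hβ hij hik hjk hsr hp hl hr hap has har
    · exact absurd rfl hlk
  obtain ⟨l, hl⟩ := h.exists_rel_of_const hβ hat
  obtain ⟨l', hl'⟩ := h.exists_rel_of_const hβ hau
  by_cases hlk : l = k
  · by_cases hlk' : l' = k
    · subst hlk hlk'
      have hpa : p ≠ a := h.ne_of_const hβ hp
      have hqa : q ≠ a := h.ne_of_const hβ hq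
      have hadj : ∀ {s}, K33.Adj a s → K33.Adj s p ∧ K33.Adj s q ∧ s ≠ a ∧ s ≠ p ∧ s ≠ q := by
        grind [K33_adj_iff]
      refine hasLeggedPair_of_lists hij hik hjk t u [p] [q] [] (by grind) (by grind)
        (isLeg_and_touches_singleton hp ?_ ?_) (isLeg_and_touches_singleton hq ?_ ?_)
        (isLeg_and_touches_nil hl hl') <;> grind
    · exact of_ne hur hau hl' hlk'
  · exact of_ne htr hat hl hlk

lemma exists_pair_eq (f : Fin 3 → Bool) :
    ∃ i j k : Fin 3, i ≠ j ∧ i ≠ k ∧ j ≠ k ∧ f j = f k := by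
  decide +revert

lemma hasLeggedPair_K33_of_const (h : IsAttachment K33 β E) (hβ : Set.range β = {a}) :
    HasLeggedPair K33 β E := by
  have hβa : ∀ i, β i = a := fun i => hβ.subset ⟨i, rfl⟩
  obtain ⟨m, hm, hE⟩ := h.matching fun hinj =>
    absurd (hinj ((hβa 0).trans (hβa 1).symm)) (by decide)
  obtain ⟨i, j, k, hij, hik, hjk, hside⟩ := exists_pair_eq fun l => side (m l)
  have hadj : ∀ l, side (m l) ≠ side a → K33.Adj a (m l) := fun l hl => K33_adj_iff.2 hl.symm
  by_cases hj : side (m j) = side a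
  · have hk : side (m k) = side a := hside.symm.trans hj
    refine h.hasLeggedPair_K33_of_const_of_one hβ hjk hij.symm hik.symm (hm.ne hjk) (hE j) (hE k)
      (hE i) hj hk (hadj i fun hi => ?_)
    obtain ⟨c, -, -, -, hc⟩ := exists_third_side_eq (m j) (m k) (hm.ne hjk) hside
    have hia : m i ≠ a := h.ne_of_const hβ (hE i)
    grind [hm.eq_iff, h.ne_of_const hβ (hE j), h.ne_of_const hβ (hE k)]
  · have hk : side (m k) ≠ side a := hside ▸ hj
    by_cases hi : side (m i) = side a
    · exact h.hasLeggedPair_K33_of_const_of_two hβ hij hik hjk (hm.ne hjk) (hE i) (hE j) (hE k) hi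
        (hadj j hj) (hadj k hk)
    · exact hasLeggedPair_K33_of_const_of_three hβ hij hik hjk (hm.ne hij) (hm.ne hik) (hm.ne hjk)
        (hE i) (hE j) (hE k) (hadj i hi) (hadj j hj) (hadj k hk)

end IsAttachment

lemma exists_two_adj_of_adj {a b : Fin 3 ⊕ Fin 3} (hab : K33.Adj a b) :
    ∃ p q, p ≠ b ∧ q ≠ b ∧ p ≠ q ∧ K33.Adj a p ∧ K33.Adj a q := by
  obtain ⟨p, hpb, hp⟩ := exists_side_eq b
  obtain ⟨q, hqb, hqp, hq, -⟩ := exists_third_side_eq b p hpb.symm hp.symm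
  exact ⟨p, q, hpb, hqb, hqp.symm, K33_adj_of_side_eq hab hp, K33_adj_of_side_eq hab hq⟩

lemma exists_K33_adj (a : Fin 3 ⊕ Fin 3) : ∃ b, K33.Adj a b := by
  cases a <;> simp [K33]

namespace IsAttachment

lemma hasLeggedPair_K33_of_injective (h : IsAttachment K33 β E) (hβ : Function.Injective β) :
    HasLeggedPair K33 β E := by
  obtain ⟨i, j, k, hij, hik, hjk, hside⟩ := exists_pair_eq fun l => side (β l)
  have hrange : Set.range β = {β i, β j, β k} := range_eq_triple hij hik hjk
  have hE : ∀ {w} l, w ∉ Set.range β → K33.Adj (β l) w → E l w := fun l hw hlw =>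
    h.rel_of_injective hβ hw hlw.symm
  have hadj : ∀ {w}, K33.Adj (β j) w → K33.Adj (β k) w := fun hw =>
    (K33_adj_of_side_eq hw.symm hside.symm).symm
  by_cases hi : side (β i) = side (β j)
  · obtain ⟨b, hb⟩ := exists_K33_adj (β j)
    obtain ⟨p, q, -, -, hpq, hp, hq⟩ := exists_two_adj_of_adj hb
    have hadj' : ∀ {w}, K33.Adj (β j) w → K33.Adj (β i) w := fun hw =>
      (K33_adj_of_side_eq hw.symm hi).symm
    have hout : ∀ {w}, K33.Adj (β j) w → w ∉ Set.range β := fun hw => by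
      simp [hrange, hw.ne', (hadj hw).ne', (hadj' hw).ne']
    exact hasLeggedPair_of_lists hij hik hjk p q [] [] [] (by simpa)
      (by simp [hout hp, hout hq, -Set.mem_range])
      (isLeg_and_touches_nil (hE i (hout hp) (hadj' hp)) (hE i (hout hq) (hadj' hq)))
      (isLeg_and_touches_nil (hE j (hout hp) hp) (hE j (hout hq) hq))
      (isLeg_and_touches_nil (hE k (hout hp) (hadj hp)) (hE k (hout hq) (hadj hq)))
  · have hji : K33.Adj (β j) (β i) := K33_adj_iff.2 (Ne.symm hi)
    obtain ⟨p, q, hpi, hqi, hpq, hp, hq⟩ := exists_two_adj_of_adj hji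
    obtain ⟨t, htj, htk, htside, -⟩ := exists_third_side_eq _ _ (hβ.ne hjk) hside
    have hadj' : ∀ {w}, K33.Adj (β j) w → K33.Adj w t := fun hw =>
      K33_adj_of_side_eq hw.symm htside
    have hout : ∀ {w}, w ≠ β i → K33.Adj (β j) w → w ∉ Set.range β := fun hwi hw => by
      simp [hrange, hwi, hw.ne', (hadj hw).ne']
    have ht : t ∉ Set.range β := by
      simp [hrange, htj, htk, (hadj' hji).ne']
    exact hasLeggedPair_of_lists hij hik hjk p q [t] [] []
      (by simp [hpq, (hadj' hp).ne, (hadj' hq).ne])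
      (by simp [hout hpi hp, hout hqi hq, ht, -Set.mem_range])
      (isLeg_and_touches_singleton (hE i ht (hadj' hji)) (.inr (hadj' hp)) (.inr (hadj' hq)))
      (isLeg_and_touches_nil (hE j (hout hpi hp) hp) (hE j (hout hqi hq) hq))
      (isLeg_and_touches_nil (hE k (hout hpi hp) (hadj hp)) (hE k (hout hqi hq) (hadj hq)))

section Pair

variable (h : IsAttachment K33 β E) (hij : i ≠ j) (hik : i ≠ k) (hjk : j ≠ k) (hβij : β i = β j)
  (hβik : β i ≠ β k)

include h hij hik hjk hβij hβik

lemma hasLeggedPair_K33_of_same_side_of_split (hside : side (β i) = side (β k))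
    (hpq : p ≠ q) (hpr : p ≠ r) (hqr : q ≠ r) (hp : K33.Adj (β i) p) (hq : K33.Adj (β i) q)
    (hr : K33.Adj (β i) r) (hEp : E i p) (hEq : E i q) (hEr : E j r) : HasLeggedPair K33 β E := by
  have hrange : Set.range β = {β i, β k} := range_eq_pair hij hik hjk hβij
  obtain ⟨a, hai, hak, ha, -⟩ := exists_third_side_eq _ _ hβik hside
  have hadj : ∀ {w}, K33.Adj (β i) w → K33.Adj w (β k) ∧ K33.Adj w a := fun hw =>
    ⟨K33_adj_of_side_eq hw.symm hside.symm, K33_adj_of_side_eq hw.symm ha⟩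
  have hout : ∀ {w}, K33.Adj (β i) w → w ∉ Set.range β ∧ E k w := fun {w} hw =>
    have hwr : w ∉ Set.range β := by simp [hrange, hw.ne', (hadj hw).1.ne]
    ⟨hwr, h.rel_of_pair_right hij hik hjk hβij hβik hwr (hadj hw).1⟩
  have ha' : a ∉ Set.range β := by simp [hrange, hai, hak]
  exact hasLeggedPair_of_lists hij hik hjk p q [] [r, a] []
    (by simp [hpq, hpr, hqr, (hadj hp).2.ne, (hadj hq).2.ne, (hadj hr).2.ne])
    (by simp [hout hp, hout hq, hout hr, ha', -Set.mem_range])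
    (isLeg_and_touches_nil hEp hEq)
    (isLeg_and_touches_pair hEr (hadj hr).2 (.inr (hadj hp).2) (.inr (hadj hq).2))
    (isLeg_and_touches_nil (hout hp).2 (hout hq).2)

lemma hasLeggedPair_K33_of_same_side_of_all (hside : side (β i) = side (β k))
    (hall : ∀ ⦃w⦄, K33.Adj (β i) w → E i w) : HasLeggedPair K33 β E := by
  have hrange : Set.range β = {β i, β k} := range_eq_pair hij hik hjk hβij
  obtain ⟨m, -, hm⟩ := h.matching fun hinj => hij (hinj hβij)
  by_cases hmi : side (m j) = side (β i)
  · obtain ⟨b, hb⟩ := exists_K33_adj (β i)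
    obtain ⟨p, q, -, -, hpq, hp, hq⟩ := exists_two_adj_of_adj hb
    have hadj : ∀ {w}, K33.Adj (β i) w → K33.Adj w (β k) ∧ K33.Adj w (m j) := fun hw =>
      ⟨K33_adj_of_side_eq hw.symm hside.symm, K33_adj_of_side_eq hw.symm hmi⟩
    have hout : ∀ {w}, K33.Adj (β i) w → w ∉ Set.range β ∧ E k w := fun {w} hw =>
      have hwr : w ∉ Set.range β := by simp [hrange, hw.ne', (hadj hw).1.ne]
      ⟨hwr, h.rel_of_pair_right hij hik hjk hβij hβik hwr (hadj hw).1⟩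
    exact hasLeggedPair_of_lists hij hik hjk p q [] [m j] []
      (by simp [hpq, (hadj hp).2.ne, (hadj hq).2.ne])
      (by simp [hout hp, hout hq, h.notMem_range (hm j), -Set.mem_range])
      (isLeg_and_touches_nil (hall hp) (hall hq))
      (isLeg_and_touches_singleton (hm j) (.inr (hadj hp).2) (.inr (hadj hq).2))
      (isLeg_and_touches_nil (hout hp).2 (hout hq).2)
  · have him : K33.Adj (β i) (m j) := K33_adj_iff.2 (Ne.symm hmi)
    obtain ⟨p, q, hp, hq, hpq, hp', hq'⟩ := exists_two_adj_of_adj him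
    exact h.hasLeggedPair_K33_of_same_side_of_split hij hik hjk hβij hβik hside hpq hp hq hp' hq'
      him (hall hp') (hall hq') (hm j)

lemma hasLeggedPair_K33_of_same_side_of_two (hside : side (β i) = side (β k))
    (hpq : p ≠ q) (hp : K33.Adj (β i) p) (hq : K33.Adj (β i) q) (hEp : E i p) (hEq : E i q) :
    HasLeggedPair K33 β E := by
  obtain ⟨r, hrp, hrq, hr, hcover⟩ := exists_third_side_eq p q hpq (side_eq_of_adj hp hq)
  have hir : K33.Adj (β i) r := K33_adj_of_side_eq hp hr
  have hrβ : r ∉ Set.range β := by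
    simp [range_eq_pair hij hik hjk hβij, hir.ne', (K33_adj_of_side_eq hir.symm hside.symm).ne]
  obtain hEr | hEr := h.rel_of_pair_left hij hik hjk hβik hrβ hir.symm
  · refine h.hasLeggedPair_K33_of_same_side_of_all hij hik hjk hβij hβik hside fun w hw => ?_
    obtain rfl | rfl | rfl := hcover w (side_eq_of_adj hw hp)
    exacts [hEp, hEq, hEr]
  · exact h.hasLeggedPair_K33_of_same_side_of_split hij hik hjk hβij hβik hside hpq hrp.symm
      hrq.symm hp hq hir hEp hEq hEr

lemma hasLeggedPair_K33_of_same_side (hside : side (β i) = side (β k)) :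
    HasLeggedPair K33 β E := by
  obtain ⟨b, hb⟩ := exists_K33_adj (β i)
  obtain ⟨p, q, hp, hq, hpq, hp', hq'⟩ := exists_two_adj_of_adj hb
  have hE : ∀ {w}, K33.Adj (β i) w → E i w ∨ E j w := fun {w} hw => by
    refine h.rel_of_pair_left hij hik hjk hβik ?_ hw.symm
    simp [range_eq_pair hij hik hjk hβij, hw.ne', (K33_adj_of_side_eq hw.symm hside.symm).ne]
  have of_left := fun {s t : Fin 3 ⊕ Fin 3} =>
    h.hasLeggedPair_K33_of_same_side_of_two (p := s) (q := t) hij hik hjk hβij hβik hside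
  have of_right := fun {s t : Fin 3 ⊕ Fin 3} =>
    h.hasLeggedPair_K33_of_same_side_of_two (p := s) (q := t) hij.symm hjk hik hβij.symm
      (hβij ▸ hβik) (hβij ▸ hside)
  rw [← hβij] at of_right
  obtain hEb | hEb := hE hb <;> obtain hEp | hEp := hE hp' <;> obtain hEq | hEq := hE hq'
  all_goals
    first
    | exact of_left hp hp' hb hEp hEb
    | exact of_left hq hq' hb hEq hEb
    | exact of_left hpq hp' hq' hEp hEq
    | exact of_right hp hp' hb hEp hEb
    | exact of_right hq hq' hb hEq hEb
    | exact of_right hpq hp' hq' hEp hEq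

lemma hasLeggedPair_K33_of_opposite_sides_of_split (hadj : K33.Adj (β i) (β k)) (hpq : p ≠ q)
    (hpk : p ≠ β k) (hqk : q ≠ β k) (hp : K33.Adj (β i) p) (hq : K33.Adj (β i) q) (hEp : E i p)
    (hEq : E j q) : HasLeggedPair K33 β E := by
  have hrange : Set.range β = {β i, β k} := range_eq_pair hij hik hjk hβij
  obtain ⟨a, b, ha, hb, hab, hka, hkb⟩ := exists_two_adj_of_adj hadj.symm
  have hadj' : ∀ {w}, K33.Adj (β i) w → K33.Adj a w ∧ K33.Adj b w := fun hw =>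
    ⟨(K33_adj_of_side_eq hw.symm (side_eq_of_adj hka hadj.symm)).symm,
      (K33_adj_of_side_eq hw.symm (side_eq_of_adj hkb hadj.symm)).symm⟩
  have hout : ∀ {w}, w ≠ β i → w ≠ β k → w ∉ Set.range β := fun hwi hwk => by
    simp [hrange, hwi, hwk]
  have haβ := hout ha hka.ne'
  have hbβ := hout hb hkb.ne'
  exact hasLeggedPair_of_lists hij hik hjk a b [p] [q] []
    (by simp [hab, hpq, (hadj' hp).1.ne, (hadj' hp).2.ne, (hadj' hq).1.ne, (hadj' hq).2.ne])
    (by simp [haβ, hbβ, hout hp.ne' hpk, hout hq.ne' hqk, -Set.mem_range])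
    (isLeg_and_touches_singleton hEp (.inr (hadj' hp).1) (.inr (hadj' hp).2))
    (isLeg_and_touches_singleton hEq (.inr (hadj' hq).1) (.inr (hadj' hq).2))
    (isLeg_and_touches_nil (h.rel_of_pair_right hij hik hjk hβij hβik haβ hka.symm)
      (h.rel_of_pair_right hij hik hjk hβij hβik hbβ hkb.symm))

lemma hasLeggedPair_K33_of_opposite_sides_of_two (hadj : K33.Adj (β i) (β k)) (hpq : p ≠ q)
    (hpk : p ≠ β k) (hqk : q ≠ β k) (hp : K33.Adj (β i) p) (hq : K33.Adj (β i) q) (hEp : E i p)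
    (hEq : E i q) : HasLeggedPair K33 β E := by
  have hrange : Set.range β = {β i, β k} := range_eq_pair hij hik hjk hβij
  obtain ⟨m, -, hm⟩ := h.matching fun hinj => hij (hinj hβij)
  have hmβ : m j ≠ β i ∧ m j ≠ β k := by
    simpa [hrange] using h.notMem_range (hm j)
  by_cases hmi : side (m j) = side (β i)
  · obtain ⟨a, hai, ham, ha, -⟩ := exists_third_side_eq _ _ hmβ.1.symm hmi.symm
    have hka : K33.Adj (β k) a := K33_adj_of_side_eq hadj.symm ha
    have hadj' : ∀ {w}, K33.Adj (β i) w → K33.Adj w (m j) ∧ K33.Adj w a := fun hw =>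
      ⟨K33_adj_of_side_eq hw.symm hmi, K33_adj_of_side_eq hw.symm ha⟩
    have hout : ∀ {w}, w ≠ β i → w ≠ β k → w ∉ Set.range β := fun hwi hwk => by
      simp [hrange, hwi, hwk]
    have haβ := hout hai hka.ne'
    exact hasLeggedPair_of_lists hij hik hjk p q [] [m j] [a]
      (by simp [hpq, ham.symm, (hadj' hp).1.ne, (hadj' hp).2.ne, (hadj' hq).1.ne, (hadj' hq).2.ne])
      (by simp [haβ, hout hmβ.1 hmβ.2, hout hp.ne' hpk, hout hq.ne' hqk, -Set.mem_range])
      (isLeg_and_touches_nil hEp hEq)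
      (isLeg_and_touches_singleton (hm j) (.inr (hadj' hp).1) (.inr (hadj' hq).1))
      (isLeg_and_touches_singleton (h.rel_of_pair_right hij hik hjk hβij hβik haβ hka.symm)
        (.inr (hadj' hp).2) (.inr (hadj' hq).2))
  · have him : K33.Adj (β i) (m j) := K33_adj_iff.2 (Ne.symm hmi)
    have of_split := fun {s} => h.hasLeggedPair_K33_of_opposite_sides_of_split (p := s) (q := m j)
      hij hik hjk hβij hβik hadj
    by_cases hpm : p = m j
    · exact of_split (hpm ▸ hpq.symm) hqk hmβ.2 hq him hEq (hm j)
    · exact of_split hpm hpk hmβ.2 hp him hEp (hm j)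

lemma hasLeggedPair_K33_of_opposite_sides (hadj : K33.Adj (β i) (β k)) :
    HasLeggedPair K33 β E := by
  obtain ⟨p, q, hpk, hqk, hpq, hp, hq⟩ := exists_two_adj_of_adj hadj
  have hE : ∀ {w}, w ≠ β k → K33.Adj (β i) w → E i w ∨ E j w := fun {w} hwk hw => by
    refine h.rel_of_pair_left hij hik hjk hβik ?_ hw.symm
    simp [range_eq_pair hij hik hjk hβij, hw.ne', hwk]
  have hβjk : β j ≠ β k := hβij ▸ hβik
  obtain hEp | hEp := hE hpk hp <;> obtain hEq | hEq := hE hqk hq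
  · exact h.hasLeggedPair_K33_of_opposite_sides_of_two hij hik hjk hβij hβik hadj hpq hpk hqk hp hq
      hEp hEq
  · exact h.hasLeggedPair_K33_of_opposite_sides_of_split hij hik hjk hβij hβik hadj hpq hpk hqk hp
      hq hEp hEq
  · exact h.hasLeggedPair_K33_of_opposite_sides_of_split hij hik hjk hβij hβik hadj hpq.symm hqk
      hpk hq hp hEq hEp
  · rw [hβij] at hp hq hadj
    exact h.hasLeggedPair_K33_of_opposite_sides_of_two hij.symm hjk hik hβij.symm hβjk hadj hpq hpk
      hqk hp hq hEp hEq

end Pair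

theorem hasLeggedPair_K33 (h : IsAttachment K33 β E) : HasLeggedPair K33 β E := by
  obtain hβ | ⟨i, j, k, hij, hik, hjk, hβij, hβik⟩ | ⟨a, ha⟩ := injective_or_pair_or_const β
  · exact h.hasLeggedPair_K33_of_injective hβ
  · by_cases hside : side (β i) = side (β k)
    · exact h.hasLeggedPair_K33_of_same_side hij hik hjk hβij hβik hside
    · exact h.hasLeggedPair_K33_of_opposite_sides hij hik hjk hβij hβik (K33_adj_iff.2 hside)
  · exact h.hasLeggedPair_K33_of_const ha

end IsAttachment

end K33

end Attachments

section IrreducibleModels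

variable {V W : Type*} {G : SimpleGraph V} {J : SimpleGraph W} {x : V} {μ : W → Set V}

lemma connectedOn_of_isChain {v : V} {l : List V} (hl : (v :: l).IsChain G.Adj) :
    ConnectedOn G {u | u ∈ v :: l} := by
  induction l generalizing v with
  | nil => simpa using ConnectedOn.singleton G v
  | cons a l ih =>
    obtain ⟨hva, hl⟩ := List.isChain_cons_cons.1 hl
    have hset : {u | u ∈ v :: a :: l} = {v} ∪ {u | u ∈ a :: l} := by ext; simp
    exact hset ▸ (ConnectedOn.singleton G v).union_adj (ih hl) rfl List.mem_cons_self hva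

/-- The bag `μ w` contains no neighbour of `x`. -/
def IsOuter (G : SimpleGraph V) (x : V) (μ : W → Set V) (w : W) : Prop :=
  Disjoint (G.neighborSet x) (μ w)

namespace IsMinorModel

lemma eq_singleton (hμ : IsMinorModel J G μ) (hI : IsIrreducible G x μ) {w : W} {v : V}
    (hv : v ∈ μ w) (hvx : v ≠ x) (hxv : ¬ G.Adj x v) : μ w = {v} := by
  refine Set.Subset.antisymm ((hμ.connected w).subset_of_closed ⟨v, hv, rfl⟩ ?_)
    (Set.singleton_subset_iff.2 hv)
  rintro a ⟨ha, rfl⟩ b hb hab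
  have hbx : b ≠ x := fun hbx => hxv (hbx ▸ hab.symm)
  obtain ⟨w₁, w₂, hne, h₁, h₂⟩ := hI hab hvx hbx fun h => hxv h.1
  exact (hne ((eq_of_mem_of_mem hμ.disjoint h₁ ha).trans
    (eq_of_mem_of_mem hμ.disjoint hb h₂))).elim

lemma ncard_not_isOuter_le [Finite V] (hμ : IsMinorModel J G μ) :
    {w | ¬ IsOuter G x μ w}.ncard ≤ (G.neighborSet x).ncard := by
  have : Nonempty V := ⟨x⟩
  have hmeet : ∀ w, ¬ IsOuter G x μ w → ∃ y, y ∈ G.neighborSet x ∧ y ∈ μ w :=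
    fun w hw => Set.not_disjoint_iff.1 hw
  choose! f hxf hf using hmeet
  exact Set.ncard_le_ncard_of_injOn f hxf fun w hw w' hw' he =>
    eq_of_mem_of_mem hμ.disjoint (hf w hw) (he ▸ hf w' hw')

lemma exists_isOuter [Finite V] (hμ : IsMinorModel J G μ)
    (hW : (G.neighborSet x).ncard < Nat.card W) : ∃ w, IsOuter G x μ w := by
  by_contra! hno
  have hle := hμ.ncard_not_isOuter_le (x := x)
  simp only [hno, not_false_eq_true, Set.ofPred_true, Set.ncard_univ] at hle
  omega

end IsMinorModel

/-- `μ` is an irreducible model of `J`, and every bag `μ w` has a representative `s w` different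
from `x`. -/
structure IsIrreducibleModel (J : SimpleGraph W) (G : SimpleGraph V) (x : V) (μ : W → Set V)
    (s : W → V) : Prop where
  model : IsMinorModel J G μ
  irreducible : IsIrreducible G x μ
  mem : ∀ w, s w ∈ μ w
  ne : ∀ w, s w ≠ x

lemma exists_isIrreducibleModel (hμ : IsMinorModel J G μ) (hI : IsIrreducible G x μ)
    (hx : ∀ w, ¬ μ w ⊆ {x}) : ∃ s, IsIrreducibleModel J G x μ s := by
  choose s hs hsx using fun w => Set.not_subset.1 (hx w)
  exact ⟨s, hμ, hI, hs, hsx⟩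

namespace IsIrreducibleModel

variable {s : W → V}

lemma injective (h : IsIrreducibleModel J G x μ s) : Function.Injective s := fun w w' he =>
  eq_of_mem_of_mem h.model.disjoint (h.mem w) (he ▸ h.mem w')

lemma not_adj (h : IsIrreducibleModel J G x μ s) {w : W} (hw : IsOuter G x μ w) :
    ¬ G.Adj x (s w) :=
  fun hadj => Set.disjoint_left.1 hw hadj (h.mem w)

lemma eq_singleton (h : IsIrreducibleModel J G x μ s) {w : W} (hw : IsOuter G x μ w) :
    μ w = {s w} :=
  h.model.eq_singleton h.irreducible (h.mem w) (h.ne w) (h.not_adj hw)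

lemma adj (h : IsIrreducibleModel J G x μ s) {w w' : W} (hw : IsOuter G x μ w)
    (hw' : IsOuter G x μ w') (hadj : J.Adj w w') : G.Adj (s w) (s w') := by
  obtain ⟨a, ha, b, hb, hab⟩ := h.model.adj hadj
  rw [h.eq_singleton hw] at ha
  rw [h.eq_singleton hw'] at hb
  exact ha ▸ hb ▸ hab

lemma exists_mem_of_adj (h : IsIrreducibleModel J G x μ s) {w : W} (hw : IsOuter G x μ w) {b : V}
    (hbx : b ≠ x) (hab : G.Adj (s w) b) : ∃ w', b ∈ μ w' := by
  obtain ⟨-, w', -, -, hb⟩ := h.irreducible hab (h.ne w) hbx fun hadj => h.not_adj hw hadj.1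
  exact ⟨w', hb⟩

lemma exists_eq_of_adj (h : IsIrreducibleModel J G x μ s) {w : W} (hw : IsOuter G x μ w) {b : V}
    (hab : G.Adj (s w) b) (hxb : ¬ G.Adj x b) : ∃ w', IsOuter G x μ w' ∧ s w' = b := by
  have hbx : b ≠ x := fun hbx => h.not_adj hw (hbx ▸ hab.symm)
  obtain ⟨w', hb⟩ := h.exists_mem_of_adj hw hbx hab
  have hw' := h.model.eq_singleton h.irreducible hb hbx hxb
  refine ⟨w', ?_, Set.mem_singleton_iff.1 (hw' ▸ h.mem w')⟩
  rw [IsOuter, hw']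
  exact Set.disjoint_singleton_right.2 hxb

lemma exists_adj_notMem [Finite V] (h : IsIrreducibleModel J G x μ s) (hT : IsTied G x μ)
    {S : Set V} (hS : S.ncard ≤ 2) {w : W} (hw : IsOuter G x μ w) (hwS : s w ∉ S) :
    ∃ y w', G.Adj x y ∧ y ∉ S ∧ IsOuter G x μ w' ∧ s w' ∉ S ∧ G.Adj y (s w') := by
  by_contra! hno
  let D : Set V := s '' {w | IsOuter G x μ w ∧ s w ∉ S}
  have hD : ∀ a ∈ D, ∀ b, G.Adj a b → b ∈ D ∪ S := by
    rintro _ ⟨w, ⟨hw, hwS⟩, rfl⟩ b hab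
    by_cases hxb : G.Adj x b
    · exact .inr (by_contra fun hbS => hno b w hxb hbS hw hwS hab.symm)
    · obtain ⟨w', hw', rfl⟩ := h.exists_eq_of_adj hw hab hxb
      exact or_iff_not_imp_right.2 fun hwS' => ⟨w', ⟨hw', hwS'⟩, rfl⟩
  have hsep : IsSeparation G Dᶜ (D ∪ S) := by
    refine ⟨fun v => (em (v ∈ D)).symm.imp_right .inl, fun a b hab => ?_⟩
    by_cases ha : a ∈ D
    · exact .inr ⟨.inl ha, hD a ha b hab⟩
    · by_cases hb : b ∈ D
      · exact .inr ⟨hD b hb a hab.symm, .inl hb⟩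
      · exact .inl ⟨ha, hb⟩
  have hND : insert x (G.neighborSet x) ⊆ Dᶜ := by
    rintro _ hv ⟨w, ⟨hw, -⟩, rfl⟩
    exact hv.elim (h.ne w) (h.not_adj hw)
  have hwD : Disjoint (μ w) Dᶜ := by
    rw [h.eq_singleton hw, Set.disjoint_compl_right_iff_subset, Set.singleton_subset_iff]
    exact ⟨w, ⟨hw, hwS⟩, rfl⟩
  have hDS : Dᶜ ∩ (D ∪ S) ⊆ S := fun v hv => hv.2.resolve_left hv.1
  have := (hT.three_le_ncard hsep hND hwD).trans (Set.ncard_le_ncard hDS)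
  omega

lemma exists_mem [Finite V] (h : IsIrreducibleModel J G x μ s) (hT : IsTied G x μ)
    (hN : (G.neighborSet x).ncard ≤ 3) {w : W} (hw : IsOuter G x μ w) {y : V} (hxy : G.Adj x y) :
    ∃ w', y ∈ μ w' := by
  have hS : (G.neighborSet x \ {y}).ncard ≤ 2 := by
    have := Set.ncard_sdiff_singleton_add_one (s := G.neighborSet x) hxy
    omega
  obtain ⟨z, w', hxz, hzS, hw', -, hzw⟩ :=
    h.exists_adj_notMem hT hS hw fun hwS => h.not_adj hw hwS.1
  obtain rfl : z = y := by_contra fun hne => hzS ⟨hxz, hne⟩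
  exact h.exists_mem_of_adj hw' hxz.ne' hzw.symm

lemma exists_matching [Finite V] (h : IsIrreducibleModel J G x μ s) (hT : IsTied G x μ)
    {y : Fin 3 → V} (hy : Set.range y = G.neighborSet x)
    (hO : 3 ≤ {w | IsOuter G x μ w}.ncard) : ∃ m : Fin 3 → W, Function.Injective m ∧
      ∀ i, IsOuter G x μ (m i) ∧ G.Adj (y i) (s (m i)) := by
  classical
  have := Finite.of_injective s h.injective
  cases nonempty_fintype W
  let t (i : Fin 3) : Finset W := {w | IsOuter G x μ w ∧ G.Adj (y i) (s w)}
  have hall : ∀ P : Finset (Fin 3), P.card ≤ (P.biUnion t).card := fun P => by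
    by_contra! hlt
    have hP : P.card + Pᶜ.card = 3 := P.card_add_card_compl
    obtain ⟨w, hw, hwN⟩ := Set.exists_mem_notMem_of_ncard_lt_ncard
      (s := (P.biUnion t : Set W)) (t := {w | IsOuter G x μ w})
      (by rw [Set.ncard_coe_finset]; omega)
    let S : Finset V := Pᶜ.image y ∪ (P.biUnion t).image s
    have hS : (S : Set V).ncard ≤ 2 := by
      have hcard : S.card ≤ Pᶜ.card + (P.biUnion t).card :=
        (Finset.card_union_le _ _).trans (add_le_add Finset.card_image_le Finset.card_image_le)
      rw [Set.ncard_coe_finset]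
      omega
    have hmem {v : V} : v ∈ (S : Set V) ↔ (∃ i ∉ P, y i = v) ∨ ∃ w ∈ P.biUnion t, s w = v := by
      simp only [S, Finset.mem_coe, Finset.mem_union, Finset.mem_image, Finset.mem_compl]
    have hwS : s w ∉ (S : Set V) := fun hwS => by
      obtain ⟨i, -, hi⟩ | ⟨w', hw', he⟩ := hmem.1 hwS
      · exact h.not_adj hw (hy.subset ⟨i, hi⟩)
      · exact hwN (h.injective he ▸ hw')
    obtain ⟨_, w', hxy, hyS, hw', hwS', hadj⟩ := h.exists_adj_notMem hT hS hw hwS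
    obtain ⟨i, rfl⟩ := hy.superset hxy
    have hi : i ∈ P := by_contra fun hi => hyS (hmem.2 (.inl ⟨i, hi, rfl⟩))
    exact hwS' (hmem.2 (.inr ⟨w', Finset.mem_biUnion.2 ⟨i, hi, by simp [t, hw', hadj]⟩, rfl⟩))
  obtain ⟨m, hm, hmt⟩ := (Finset.all_card_le_biUnion_card_iff_exists_injective t).1 hall
  exact ⟨m, hm, fun i => by simpa [t] using hmt i⟩

variable {y : Fin 3 → V} {β : Fin 3 → W}

lemma isOuter_iff (h : IsIrreducibleModel J G x μ s) (hy : Set.range y = G.neighborSet x)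
    (hβ : ∀ i, y i ∈ μ (β i)) {w : W} : IsOuter G x μ w ↔ w ∉ Set.range β := by
  constructor
  · rintro hw ⟨i, rfl⟩
    exact Set.disjoint_left.1 hw (hy.subset ⟨i, rfl⟩) (hβ i)
  · refine fun hw => Set.disjoint_left.2 fun v hxv hv => ?_
    obtain ⟨i, rfl⟩ := hy.superset hxv
    exact hw ⟨i, eq_of_mem_of_mem h.model.disjoint (hβ i) hv⟩

lemma isAttachment [Finite V] (h : IsIrreducibleModel J G x μ s) (hT : IsTied G x μ)
    (hW : 5 ≤ Nat.card W) (hy : Set.range y = G.neighborSet x) (hβ : ∀ i, y i ∈ μ (β i)) :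
    IsAttachment J β fun i w => IsOuter G x μ w ∧ G.Adj (y i) (s w) := by
  have := Finite.of_injective s h.injective
  have hout {w} : IsOuter G x μ w ↔ w ∉ Set.range β := h.isOuter_iff hy hβ
  refine ⟨fun i w hw => hout.1 hw.1, fun w i hw hadj => ?_, fun hβi => h.exists_matching hT hy ?_⟩
  · have hw := hout.2 hw
    obtain ⟨a, ha, b, hb, hab⟩ := h.model.adj hadj
    rw [h.eq_singleton hw] at ha
    obtain rfl := Set.mem_singleton_iff.1 ha
    have hxb : G.Adj x b := by
      by_contra hxb
      obtain ⟨w', hw', rfl⟩ := h.exists_eq_of_adj hw hab hxb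
      exact hout.1 hw' ⟨i, eq_of_mem_of_mem h.model.disjoint hb (h.mem w')⟩
    obtain ⟨j, rfl⟩ := hy.superset hxb
    exact ⟨j, eq_of_mem_of_mem h.model.disjoint (hβ j) hb, hw, hab.symm⟩
  · have hβ₂ : (Set.range β).ncard ≤ 2 := by
      have hle : (β '' Set.univ).ncard ≤ Set.univ.ncard := Set.ncard_image_le
      have hne : (β '' Set.univ).ncard ≠ Set.univ.ncard := fun he =>
        hβi (Set.injOn_univ.1 (Set.injOn_of_ncard_image_eq he))
      rw [Set.image_univ, Set.ncard_univ, Nat.card_fin] at hle hne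
      omega
    have hcompl : {w | IsOuter G x μ w} = (Set.range β)ᶜ := Set.ext fun w => hout
    have := Set.ncard_add_ncard_compl (Set.range β)
    rw [hcompl]
    omega

lemma isChain_leg (h : IsIrreducibleModel J G x μ s) {i : Fin 3} {l : List W}
    (hout : ∀ t ∈ l, IsOuter G x μ t)
    (hl : IsLeg J (fun i w => IsOuter G x μ w ∧ G.Adj (y i) (s w)) i l) :
    (y i :: l.map s).IsChain G.Adj := by
  refine List.isChain_cons.2 ⟨fun v hv => ?_, (List.isChain_map s).2
    (hl.1.imp_of_mem_imp fun a b ha hb hab => h.adj (hout a ha) (hout b hb) hab)⟩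
  rw [List.head?_map] at hv
  obtain ⟨t, ht, rfl⟩ := Option.mem_map.1 hv
  exact (hl.2 t ht).2

lemma hasRootedK23_of_isLeggedPair (h : IsIrreducibleModel J G x μ s)
    (hy : Set.range y = G.neighborSet x) (hyi : Function.Injective y) (hβ : ∀ i, y i ∈ μ (β i))
    {p q : W} {L : Fin 3 → List W}
    (hL : IsLeggedPair J β (fun i w => IsOuter G x μ w ∧ G.Adj (y i) (s w)) p q L) :
    HasRootedK23 G x := by
  have hout {w} : w ∉ Set.range β → IsOuter G x μ w := (h.isOuter_iff hy hβ).2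
  have hxy (i) : G.Adj x (y i) := hy.subset ⟨i, rfl⟩
  have hLout (i) : ∀ t ∈ L i, IsOuter G x μ t := fun t ht => hout (hL.leg_notMem_range i t ht)
  have hsy {w} (hw : IsOuter G x μ w) (i) : s w ≠ y i := fun he => h.not_adj hw (he ▸ hxy i)
  let r : Fin 2 → W := ![p, q]
  have hr : Pairwise fun j j' => r j ≠ r j' := by
    simp [Pairwise, Fin.forall_fin_two, r, hL.ne, hL.ne.symm]
  have hrout : ∀ j, IsOuter G x μ (r j) :=
    Fin.forall_fin_two.2 ⟨hout hL.left_notMem_range, hout hL.right_notMem_range⟩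
  have hrL : ∀ j i, r j ∉ L i := Fin.forall_fin_two.2 ⟨hL.left_notMem, hL.right_notMem⟩
  have hrt : ∀ j i, Touches J (fun i w => IsOuter G x μ w ∧ G.Adj (y i) (s w)) (r j) i (L i) :=
    Fin.forall_fin_two.2 ⟨hL.left_touches, hL.right_touches⟩
  have hmem {v i} : v ∈ y i :: (L i).map s ↔ v = y i ∨ ∃ t ∈ L i, s t = v := by
    simp only [List.mem_cons, List.mem_map]
  refine ⟨fun j => {s (r j)}, fun i => {v | v ∈ y i :: (L i).map s},
    fun j => .singleton G _, fun i => connectedOn_of_isChain (h.isChain_leg (hLout i) (hL.isLeg i)),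
    fun j => (h.ne _).symm, fun i hx => ?_,
    fun j j' hj => Set.disjoint_singleton.2 (h.injective.ne (hr hj)), fun i i' hi => ?_,
    fun j i => Set.disjoint_singleton_left.2 fun hv => ?_, fun i => ⟨y i, by simp, hxy i⟩,
    fun j i => ?_⟩
  · obtain he | ⟨t, -, he⟩ := hmem.1 hx
    exacts [(hxy i).ne he, h.ne t he]
  · refine Set.disjoint_left.2 fun v hv hv' => ?_
    obtain rfl | ⟨t, ht, rfl⟩ := hmem.1 hv <;> obtain he | ⟨t', ht', he⟩ := hmem.1 hv'
    · exact hi (hyi he)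
    · exact hsy (hLout i' t' ht') i he
    · exact hsy (hLout i t ht) i' he
    · exact hL.disjoint hi ht (h.injective he ▸ ht')
  · obtain he | ⟨t, ht, he⟩ := hmem.1 hv
    exacts [hsy (hrout j) i he, hrL j i (h.injective he ▸ ht)]
  · obtain ⟨-, hadj⟩ | ⟨t, ht, hadj⟩ := hrt j i
    · exact ⟨_, rfl, y i, by simp, hadj.symm⟩
    · exact ⟨_, rfl, s t, hmem.2 (.inr ⟨t, ht, rfl⟩), h.adj (hrout j) (hLout i t ht) hadj⟩

lemma hasRootedK23 [Finite V] (h : IsIrreducibleModel J G x μ s) (hT : IsTied G x μ)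
    (hN : (G.neighborSet x).ncard = 3) (hW : 5 ≤ Nat.card W)
    (hJ : ∀ β E, IsAttachment J β E → HasLeggedPair J β E) : HasRootedK23 G x := by
  let e : G.neighborSet x ≃ Fin 3 := Finite.equivFinOfCardEq hN
  let y (i : Fin 3) : V := e.symm i
  have hyi : Function.Injective y := Subtype.val_injective.comp e.symm.injective
  have hy : Set.range y = G.neighborSet x :=
    (e.symm.surjective.range_comp Subtype.val).trans Subtype.range_val
  obtain ⟨w, hw⟩ := h.model.exists_isOuter (x := x) (by omega)
  choose β hβ using fun i => h.exists_mem hT hN.le hw (hy.subset ⟨i, rfl⟩)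
  obtain ⟨p, q, L, hL⟩ := hJ β _ (h.isAttachment hT hW hy hβ)
  exact h.hasRootedK23_of_isLeggedPair hy hyi hβ hL

end IsIrreducibleModel

lemma IsMinorModel.exists_adj_of_subset_singleton (hμ : IsMinorModel J G μ) {w w' : W}
    (hw : μ w ⊆ {x}) (hadj : J.Adj w w') : ∃ y ∈ μ w', G.Adj x y := by
  obtain ⟨a, ha, b, hb, hab⟩ := hμ.adj hadj
  obtain rfl : a = x := hw ha
  exact ⟨b, hb, hab⟩

lemma IsMinorModel.not_subset_singleton_of_K5 [Finite V] {μ : Fin 5 → Set V}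
    (hμ : IsMinorModel K5 G μ) (hN : (G.neighborSet x).ncard = 3) (w : Fin 5) : ¬ μ w ⊆ {x} := by
  intro hw
  have hsub : {w}ᶜ ⊆ {w | ¬ IsOuter G x μ w} := fun w' hw' =>
    have ⟨y, hy, hxy⟩ := hμ.exists_adj_of_subset_singleton hw ((top_adj _ _).2 (Ne.symm hw'))
    Set.not_disjoint_iff.2 ⟨y, hxy, hy⟩
  have hle := (Set.ncard_le_ncard hsub).trans hμ.ncard_not_isOuter_le
  rw [Set.ncard_compl, Set.ncard_singleton, Nat.card_fin] at hle
  omega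

theorem hasRootedK23_of_K5 [Finite V] {μ : Fin 5 → Set V} (hμ : IsMinorModel K5 G μ)
    (hT : IsTied G x μ) (hN : (G.neighborSet x).ncard = 3) : HasRootedK23 G x := by
  refine hasRootedK23_of_irreducible (fun w w' hne hadj => (hadj (K5_adj_iff.2 hne)).elim)
    (fun G μ hN hμ hT hI => ?_) hN hμ hT
  obtain ⟨s, hs⟩ := exists_isIrreducibleModel hμ hI (hμ.not_subset_singleton_of_K5 hN)
  exact hs.hasRootedK23 hT hN (by simp) fun _ _ => IsAttachment.hasLeggedPair_K5

lemma exists_K23_of_K33 (w : Fin 3 ⊕ Fin 3) : ∃ (a : Fin 2 → Fin 3 ⊕ Fin 3)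
    (c : Fin 3 → Fin 3 ⊕ Fin 3), Function.Injective a ∧ Function.Injective c ∧ (∀ j, a j ≠ w) ∧
      ∀ i, K33.Adj w (c i) ∧ ∀ j, K33.Adj (a j) (c i) := by
  obtain w | w := w
  · exact ⟨fun j => .inl (w.succAbove j), .inr, Sum.inl_injective.comp w.succAbove_right_injective,
      Sum.inr_injective, fun j => Sum.inl_injective.ne (w.succAbove_ne j), by simp [K33]⟩
  · exact ⟨fun j => .inr (w.succAbove j), .inl, Sum.inr_injective.comp w.succAbove_right_injective,
      Sum.inl_injective, fun j => Sum.inr_injective.ne (w.succAbove_ne j), by simp [K33]⟩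

lemma IsMinorModel.hasRootedK23_of_subset_singleton {μ : Fin 3 ⊕ Fin 3 → Set V}
    (hμ : IsMinorModel K33 G μ) {w : Fin 3 ⊕ Fin 3} (hw : μ w ⊆ {x}) : HasRootedK23 G x := by
  obtain ⟨a, c, ha, hc, haw, hac⟩ := exists_K23_of_K33 w
  have hxw : x ∈ μ w := by
    obtain ⟨v, hv⟩ := (hμ.connected w).nonempty
    exact hw hv ▸ hv
  have hx {w'} (hne : w' ≠ w) : x ∉ μ w' := Set.disjoint_right.1 (hμ.disjoint hne) hxw
  exact ⟨fun j => μ (a j), fun i => μ (c i), fun j => hμ.connected _, fun i => hμ.connected _,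
    fun j => hx (haw j), fun i => hx (hac i).1.ne', fun j j' hj => hμ.disjoint (ha.ne hj),
    fun i i' hi => hμ.disjoint (hc.ne hi), fun j i => hμ.disjoint ((hac i).2 j).ne,
    fun i => hμ.exists_adj_of_subset_singleton hw (hac i).1, fun j i => hμ.adj ((hac i).2 j)⟩

theorem hasRootedK23_of_K33 [Finite V] {μ : Fin 3 ⊕ Fin 3 → Set V} (hμ : IsMinorModel K33 G μ)
    (hT : IsTied G x μ) (hN : (G.neighborSet x).ncard = 3) : HasRootedK23 G x := by
  refine hasRootedK23_of_irreducible (fun w w' _ hadj => ?_) (fun G μ hN hμ hT hI => ?_) hN hμ hT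
  · match w, w' with
    | .inl _, .inl _ => exact ⟨.inr, Sum.inr_injective, by simp [K33]⟩
    | .inr _, .inr _ => exact ⟨.inl, Sum.inl_injective, by simp [K33]⟩
    | .inl _, .inr _ | .inr _, .inl _ => simp [K33] at hadj
  · by_cases hx : ∃ w, μ w ⊆ {x}
    · obtain ⟨w, hw⟩ := hx
      exact hμ.hasRootedK23_of_subset_singleton hw
    · obtain ⟨s, hs⟩ := exists_isIrreducibleModel hμ hI (not_exists.1 hx)
      exact hs.hasRootedK23 hT hN (by simp) fun _ _ => IsAttachment.hasLeggedPair_K33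

end IrreducibleModels

section Subdivision

variable {V V' ι κ : Type*} {G : SimpleGraph V} {G' : SimpleGraph V'}

lemma ConnectedOn.exists_isPath {S : Set V} (hS : ConnectedOn G S) {p q : V} (hp : p ∈ S)
    (hq : q ∈ S) : ∃ w : G.Walk p q, w.IsPath ∧ ∀ v ∈ w.support, v ∈ S := by
  obtain ⟨w, hw⟩ := Connected.exists_isPath hS ⟨p, hp⟩ ⟨q, hq⟩
  refine ⟨w.map (Embedding.induce S).toHom, hw.map Subtype.val_injective, fun v hv => ?_⟩
  obtain ⟨u, -, rfl⟩ := List.mem_map.1 (Walk.support_map _ w ▸ hv)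
  exact u.2

/-- The walks `P k` are the legs of a subdivided star with centre `m` inside `S`. -/
structure IsSpider (S : Set V) {m : V} {t : ι → V} (P : ∀ k, G.Walk m (t k)) : Prop where
  center_mem : m ∈ S
  isPath : ∀ k, (P k).IsPath
  mem : ∀ k, ∀ v ∈ (P k).support, v ∈ S
  eq_center : ∀ ⦃k k'⦄, k ≠ k' → ∀ v ∈ (P k).support, v ∈ (P k').support → v = m

lemma ConnectedOn.exists_isSpider {S : Set V} (hS : ConnectedOn G S) {t : Fin 3 → V}
    (ht : ∀ k, t k ∈ S) : ∃ (m : V) (P : ∀ k, G.Walk m (t k)), IsSpider S P := by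
  classical
  obtain ⟨w, hw, hwS⟩ := hS.exists_isPath (ht 1) (ht 2)
  obtain ⟨u, hu, huS⟩ := hS.exists_isPath (ht 0) (ht 1)
  obtain ⟨m, hmw, hmu, hfirst⟩ := u.exists_mem_support_forall_mem_support_imp_eq w.support.toFinset
    ⟨t 1, by simp⟩
  simp only [List.mem_toFinset] at hmw hfirst
  obtain ⟨q, r, hq, hr, rfl⟩ := hw.mem_support_iff_exists_append.1 hmw
  have hsplit {v : V} (hvq : v ∈ q.support) (hvr : v ∈ r.support) : v = m := by
    by_contra hne
    exact hw.ne_of_mem_support_of_append hne hvq hvr rfl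
  simp only [Walk.mem_support_append_iff] at hwS hfirst
  refine ⟨m, Fin.cons (u.takeUntil m hmu).reverse (Fin.cons q.reverse (Fin.cons r finZeroElim)),
    hwS m (.inl q.end_mem_support), ?_, ?_, ?_⟩
  · exact Fin.forall_fin_succ.2 ⟨(hu.takeUntil hmu).reverse, by simp [Fin.forall_fin_succ, hq, hr]⟩
  · have hP : (∀ v ∈ (u.takeUntil m hmu).support, v ∈ S) ∧ (∀ v ∈ q.support, v ∈ S) ∧
        ∀ v ∈ r.support, v ∈ S :=
      ⟨fun v hv => huS v (u.support_takeUntil_subset_support hmu hv), fun v hv => hwS v (.inl hv),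
        fun v hv => hwS v (.inr hv)⟩
    simpa [Fin.forall_fin_succ] using hP
  · have huq : ∀ v ∈ (u.takeUntil m hmu).support, v ∈ q.support → v = m :=
      fun v hv hvq => hfirst v (.inl hvq) hv
    have hur : ∀ v ∈ (u.takeUntil m hmu).support, v ∈ r.support → v = m :=
      fun v hv hvr => hfirst v (.inr hvr) hv
    simpa [Fin.forall_fin_succ] using
      ⟨⟨huq, hur⟩, ⟨fun v hq hu => huq v hu hq, fun v => hsplit⟩,
        fun v hr hu => hur v hu hr, fun v hr hq => hsplit hq hr⟩

lemma exists_coe_walk {H : G.Subgraph} {u v : V} {w : G.Walk u v} (hw : w.toSubgraph ≤ H)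
    (hu : u ∈ H.verts) (hv : v ∈ H.verts) : ∃ w' : H.coe.Walk ⟨u, hu⟩ ⟨v, hv⟩,
      w'.support.map Subtype.val = w.support ∧
        w'.edges.map (Sym2.map Subtype.val) = w.edges := by
  refine ⟨w.mapToSubgraph.map (Subgraph.inclusion hw), ?_, ?_⟩
  · have h := congrArg Walk.support w.map_mapToSubgraph_hom
    rw [Walk.support_map] at h
    exact (congrArg _ (Walk.support_map _ _)).trans (List.map_map.trans h)
  · have h := congrArg Walk.edges w.map_mapToSubgraph_hom
    rw [Walk.edges_map] at h
    refine (congrArg _ (Walk.edges_map _ _)).trans (List.map_map.trans ?_)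
    rwa [← Sym2.map_comp]

/-- Paths `q k i` joining `f (inl k)` to `f (inr i)`, for all `k` and `i`, that meet only in their
ends: the edges of a subdivided complete bipartite graph with branch vertices `f`. -/
structure IsPathSystem {f : ι ⊕ κ → V} (q : ∀ k i, G.Walk (f (.inl k)) (f (.inr i))) : Prop where
  injective : Function.Injective f
  isPath : ∀ k i, (q k i).IsPath
  eq_or_eq : ∀ ⦃k i w⦄, f w ∈ (q k i).support → w = .inl k ∨ w = .inr i
  mem_range : ∀ ⦃k i k' i'⦄, (k, i) ≠ (k', i') → ∀ v ∈ (q k i).support, v ∈ (q k' i').support →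
    v ∈ Set.range f

/-- The path that the system `q` assigns to an oriented edge of the complete bipartite graph. -/
def edgeWalk {f : ι ⊕ κ → V} (q : ∀ k i, G.Walk (f (.inl k)) (f (.inr i))) :
    ∀ ⦃u v⦄, (completeBipartiteGraph ι κ).Adj u v → G.Walk (f u) (f v)
  | .inl k, .inr i, _ => q k i
  | .inr i, .inl k, _ => (q k i).reverse
  | .inl _, .inl _, h => absurd h (by simp)
  | .inr _, .inr _, h => absurd h (by simp)

lemma exists_edgeWalk_eq {f : ι ⊕ κ → V} (q : ∀ k i, G.Walk (f (.inl k)) (f (.inr i)))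
    ⦃u v : ι ⊕ κ⦄ (h : (completeBipartiteGraph ι κ).Adj u v) :
    ∃ k i, s(u, v) = s(.inl k, .inr i) ∧ (edgeWalk q h).support ⊆ (q k i).support := by
  obtain k | i := u <;> obtain k' | i' := v
  · simp at h
  · exact ⟨k, i', rfl, List.Subset.refl _⟩
  · exact ⟨k', i, Sym2.eq_swap, by simp [edgeWalk]⟩
  · simp at h

namespace IsPathSystem

variable {f : ι ⊕ κ → V} {q : ∀ k i, G.Walk (f (.inl k)) (f (.inr i))}

lemma isSubdivision (h : IsPathSystem q) (hverts : ∀ v, ∃ k i, v ∈ (q k i).support)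
    (hedges : ∀ e ∈ G.edgeSet, ∃ k i, e ∈ (q k i).edges) :
    IsSubdivision G (completeBipartiteGraph ι κ) := by
  refine ⟨⟨f, h.injective⟩, edgeWalk q, ?_, ?_, fun u v _ hS => (hS trivial).elim, ?_, ?_, ?_, ?_⟩
  · rintro (k | i) (k' | i') hadj
    exacts [by simp at hadj, h.isPath k i', (h.isPath k' i).reverse, by simp at hadj]
  · rintro (k | i) (k' | i') hadj
    exacts [by simp at hadj, rfl, (Walk.reverse_reverse _).symm, by simp at hadj]
  · intro u v hadj w hw
    obtain ⟨k, i, huv, hsub⟩ := exists_edgeWalk_eq q hadj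
    have hmem : w ∈ s(u, v) := huv ▸ Sym2.mem_iff.2 (h.eq_or_eq (hsub hw))
    exact Sym2.mem_iff.1 hmem
  · intro u v u' v' hadj hadj' hne z hz hz'
    obtain ⟨k, i, huv, hsub⟩ := exists_edgeWalk_eq q hadj
    obtain ⟨k', i', huv', hsub'⟩ := exists_edgeWalk_eq q hadj'
    refine h.mem_range (fun heq => hne ?_) z (hsub hz) (hsub' hz')
    obtain ⟨rfl, rfl⟩ := Prod.mk.inj heq
    exact huv.trans huv'.symm
  · intro v
    obtain ⟨k, i, hv⟩ := hverts v
    exact .inr ⟨.inl k, .inr i, by simp, hv⟩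
  · intro e he
    obtain ⟨k, i, hki⟩ := hedges e he
    exact ⟨.inl k, .inr i, by simp, hki⟩

variable (q) in
/-- The union of the paths of the system `q`. -/
def union : G.Subgraph := ⨆ k, ⨆ i, (q k i).toSubgraph

lemma toSubgraph_le_union (k : ι) (i : κ) : (q k i).toSubgraph ≤ union q :=
  le_iSup₂_of_le k i le_rfl

lemma mem_verts_union {v : V} : v ∈ (union q).verts ↔ ∃ k i, v ∈ (q k i).support := by
  simp only [union, Subgraph.verts_iSup, Set.mem_iUnion, Walk.mem_verts_toSubgraph]

lemma mem_edgeSet_union {e : Sym2 V} : e ∈ (union q).edgeSet ↔ ∃ k i, e ∈ (q k i).edges := by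
  simp only [union, Subgraph.edgeSet_iSup, Set.mem_iUnion, Walk.mem_edges_toSubgraph]

lemma isSubdivision_union [Nonempty ι] [Nonempty κ] (h : IsPathSystem q) :
    IsSubdivision (union q).coe (completeBipartiteGraph ι κ) := by
  have hf : ∀ w, f w ∈ (union q).verts := by
    rintro (k | i)
    · exact mem_verts_union.2 ⟨k, Classical.arbitrary κ, Walk.start_mem_support _⟩
    · exact mem_verts_union.2 ⟨Classical.arbitrary ι, i, Walk.end_mem_support _⟩
  choose q' hsupport hedges using fun k i =>
    exists_coe_walk (toSubgraph_le_union (q := q) k i) (hf (.inl k)) (hf (.inr i))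
  have hmem {k i} {v : (union q).verts} : v ∈ (q' k i).support ↔ v.1 ∈ (q k i).support := by
    rw [← hsupport, List.mem_map_of_injective Subtype.val_injective]
  have hsystem : IsPathSystem (f := fun w => (⟨f w, hf w⟩ : (union q).verts)) q' := by
    refine ⟨fun w w' hww' => h.injective (congrArg Subtype.val hww'), fun k i => ?_,
      fun k i w hw => h.eq_or_eq (hmem.1 hw), fun k i k' i' hne v hv hv' => ?_⟩
    · exact .mk' (.of_map Subtype.val (hsupport k i ▸ (h.isPath k i).support_nodup))
    · obtain ⟨w, hw⟩ := h.mem_range hne v (hmem.1 hv) (hmem.1 hv')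
      exact ⟨w, Subtype.ext hw⟩
  refine hsystem.isSubdivision (fun v => ?_) (fun e he => ?_)
  · simpa only [hmem] using mem_verts_union.1 v.2
  · have he' : e.map Subtype.val ∈ (union q).edgeSet := by
      induction e with
      | h a b => exact he
    obtain ⟨k, i, hki⟩ := mem_edgeSet_union.1 he'
    rw [← hedges, List.mem_map_of_injective (Sym2.map.injective Subtype.val_injective)] at hki
    exact ⟨k, i, hki⟩

end IsPathSystem

lemma IsSpider.isPathSystem {μ : ι ⊕ κ → Set V} (hμ : Pairwise fun w w' => Disjoint (μ w) (μ w'))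
    {f : ι ⊕ κ → V} {a c : ι → κ → V} {P : ∀ k i, G.Walk (f (.inl k)) (a k i)}
    {Q : ∀ i k, G.Walk (f (.inr i)) (c k i)} (hP : ∀ k, IsSpider (μ (.inl k)) (P k))
    (hQ : ∀ i, IsSpider (μ (.inr i)) (Q i)) (hac : ∀ k i, G.Adj (a k i) (c k i)) :
    IsPathSystem fun k i => (P k i).append (.cons (hac k i) (Q i k).reverse) := by
  have hf : ∀ w, f w ∈ μ w :=
    Sum.rec (fun k => (hP k).center_mem) fun i => (hQ i).center_mem
  have hsupport {k i v} : v ∈ ((P k i).append (.cons (hac k i) (Q i k).reverse)).support ↔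
      v ∈ (P k i).support ∨ v ∈ (Q i k).support := by
    have := (P k i).end_mem_support
    simp only [Walk.mem_support_append_iff, Walk.support_cons, Walk.support_reverse]
    grind
  have heq {w w' v} (hw : v ∈ μ w) (hw' : v ∈ μ w') : w = w' := eq_of_mem_of_mem hμ hw hw'
  refine ⟨fun w w' h => heq (hf w) (h ▸ hf w'), fun k i => ?_,
    fun k i w hw => (hsupport.1 hw).imp (fun hw => heq (hf w) ((hP k).mem i _ hw))
      fun hw => heq (hf w) ((hQ i).mem k _ hw), fun k i k' i' hne v hv hv' => ?_⟩
  · rw [Walk.isPath_def, Walk.support_append, Walk.support_cons, List.tail_cons]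
    refine ((hP k).isPath i).support_nodup.append ((hQ i).isPath k).reverse.support_nodup ?_
    intro v hv hv'
    rw [Walk.support_reverse, List.mem_reverse] at hv'
    exact Sum.inl_ne_inr (heq ((hP k).mem i v hv) ((hQ i).mem k v hv'))
  · obtain h | h := hsupport.1 hv <;> obtain h' | h' := hsupport.1 hv'
    · obtain rfl := Sum.inl_injective (heq ((hP k).mem i v h) ((hP k').mem i' v h'))
      exact ⟨.inl k, ((hP k).eq_center (mt (congrArg (k, ·)) hne) v h h').symm⟩
    · exact (Sum.inl_ne_inr (heq ((hP k).mem i v h) ((hQ i').mem k' v h'))).elim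
    · exact (Sum.inr_ne_inl (heq ((hQ i).mem k v h) ((hP k').mem i' v h'))).elim
    · obtain rfl := Sum.inr_injective (heq ((hQ i).mem k v h) ((hQ i').mem k' v h'))
      exact ⟨.inr i, ((hQ i).eq_center (mt (congrArg (·, i)) hne) v h h').symm⟩

lemma IsMinorModel.exists_isPathSystem {μ : Fin 3 ⊕ Fin 3 → Set V}
    (hμ : IsMinorModel K33 G μ) :
    ∃ (f : Fin 3 ⊕ Fin 3 → V) (q : ∀ k i, G.Walk (f (.inl k)) (f (.inr i))),
      IsPathSystem q ∧ (∀ w, f w ∈ μ w) ∧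
        ∀ k i, ∃ a ∈ μ (.inl k), ∃ c ∈ μ (.inr i), s(a, c) ∈ (q k i).edges := by
  choose a ha c hc hac using fun k i : Fin 3 =>
    hμ.adj (w := .inl k) (w' := .inr i) (by simp [K33])
  choose m P hP using fun k => (hμ.connected (.inl k)).exists_isSpider (ha k)
  choose n Q hQ using fun i => (hμ.connected (.inr i)).exists_isSpider fun k => hc k i
  exact ⟨Sum.elim m n, _, IsSpider.isPathSystem hμ.disjoint hP hQ hac,
    Sum.rec (fun k => (hP k).center_mem) fun i => (hQ i).center_mem,
    fun k i => ⟨a k i, ha k i, c k i, hc k i, by simp⟩⟩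

lemma IsRootedK23.isMinorModel {x : V} {A : Fin 2 → Set V} {C : Fin 3 → Set V}
    (h : IsRootedK23 G x A C) : IsMinorModel K33 G (Sum.elim (Fin.cons {x} A) C) := by
  let A' : Fin 3 → Set V := Fin.cons {x} A
  have hx (j) : Disjoint {x} (A j) := Set.disjoint_singleton_left.2 (h.notMem_left j)
  have hA : Pairwise fun k k' => Disjoint (A' k) (A' k') := by
    intro k k' hne
    cases k using Fin.cases with
    | zero =>
      cases k' using Fin.cases with
      | zero => exact (hne rfl).elim
      | succ j' => exact hx j'
    | succ j =>
      cases k' using Fin.cases with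
      | zero => exact (hx j).symm
      | succ j' => exact h.disjoint_left (mt (congrArg Fin.succ) hne)
  have hAC (i) : ∀ k, Disjoint (A' k) (C i) :=
    Fin.cases (Set.disjoint_singleton_left.2 (h.notMem_right i)) (h.disjoint · i)
  have hadj (i) : ∀ k, ∃ a ∈ A' k, ∃ c ∈ C i, G.Adj a c :=
    Fin.cases (⟨x, rfl, h.rooted i⟩) (h.adj · i)
  refine ⟨?_, ?_, ?_⟩
  · rintro (k | i)
    · exact Fin.cases (ConnectedOn.singleton G x) h.connected_left k
    · exact h.connected_right i
  · rintro (k | i) (k' | i') hne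
    · exact hA (mt (congrArg Sum.inl) hne)
    · exact hAC i' k
    · exact (hAC i k').symm
    · exact h.disjoint_right (mt (congrArg Sum.inr) hne)
  · rintro (k | i) (k' | i') hww'
    · simp [K33] at hww'
    · exact hadj i' k
    · obtain ⟨a, ha, c, hc, hac⟩ := hadj i k'
      exact ⟨c, hc, a, ha, hac.symm⟩
    · simp [K33] at hww'

theorem HasRootedK23.exists_isSubdivision {x : V} (h : HasRootedK23 G x)
    (hN : (G.neighborSet x).ncard = 3) :
    ∃ G' : G.Subgraph, IsSubdivision G'.coe K33 ∧ x ∈ G'.verts ∧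
      (G'.neighborSet x).ncard = 3 := by
  obtain ⟨A, C, hAC⟩ := h
  obtain ⟨f, q, hq, hf, hedge⟩ := hAC.isMinorModel.exists_isPathSystem
  obtain rfl : f (.inl 0) = x := hf (.inl 0)
  refine ⟨IsPathSystem.union q, hq.isSubdivision_union,
    IsPathSystem.mem_verts_union.2 ⟨0, 0, Walk.start_mem_support _⟩, ?_⟩
  have hnbr : ∀ i, ∃ c ∈ C i, (IsPathSystem.union q).Adj (f (.inl 0)) c := fun i => by
    obtain ⟨_, rfl, c, hc, hac⟩ := hedge 0 i
    exact ⟨c, hc, IsPathSystem.mem_edgeSet_union.2 ⟨0, i, hac⟩⟩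
  choose c hc hadj using hnbr
  have hinj : Function.Injective c := fun i i' hii' =>
    eq_of_mem_of_mem hAC.disjoint_right (hc i) (hii' ▸ hc i')
  have hfin : (G.neighborSet (f (.inl 0))).Finite := Set.finite_of_ncard_ne_zero (by omega)
  have hsub := (IsPathSystem.union q).neighborSet_subset (f (.inl 0))
  refine le_antisymm ((Set.ncard_le_ncard hsub hfin).trans hN.le) ?_
  calc 3 = (Set.range c).ncard := by
        rw [← Set.image_univ, Set.ncard_image_of_injective _ hinj, Set.ncard_univ, Nat.card_fin]
    _ ≤ _ := Set.ncard_le_ncard (Set.range_subset_iff.2 hadj) (hfin.subset hsub)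

end Subdivision

lemma isTied_of_forall_isSep {V W : Type*} [Finite V] {G : SimpleGraph V} {x : V}
    (hN : (G.neighborSet x).ncard = 3)
    (hsep : ∀ (k : ℕ) (A B : Set V), k ≤ 2 → IsSep G k A B → ¬ insert x (G.neighborSet x) ⊆ A)
    {μ : W → Set V} (hμ : ∀ w, (μ w).Nonempty) : IsTied G x μ := by
  intro A B hAB hxA hcard w
  by_contra hw
  have hA : A ≠ Set.univ := fun h => hw (by simpa [h] using hμ w)
  have hB : B ≠ Set.univ := by
    rintro rfl
    have hle := Set.ncard_le_ncard ((Set.subset_insert x _).trans hxA)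
    rw [Set.inter_univ] at hcard
    omega
  exact hsep _ A B hcard ⟨Set.eq_univ_of_forall hAB.cover, hA, hB, rfl, hAB.adj⟩ hxA

end RootedK33

/-- If `x` is a cubic vertex of a nonplanar graph `G` and no `k`-separation (`k ≤ 2`)
has a side containing `x` and all its neighbours, then `G` has a subgraph that is a
subdivision of `K₃,₃` in which `x` is a (cubic) branch vertex. -/
theorem stmt5 {V : Type} [Fintype V] (G : SimpleGraph V) (hnp : ¬ Planar G) (x : V)
    (hdeg : (G.neighborSet x).ncard = 3)
    (hsep : ∀ (k : ℕ) (A B : Set V), k ≤ 2 → IsSep G k A B →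
      ¬ (insert x (G.neighborSet x) ⊆ A ∨ insert x (G.neighborSet x) ⊆ B)) :
    ∃ G' : G.Subgraph, IsSubdivision G'.coe K33 ∧ x ∈ G'.verts ∧
      (G'.neighborSet x).ncard = 3 := by
  have hT {W : Type} {μ : W → Set V} (hμ : ∀ w, (μ w).Nonempty) : RootedK33.IsTied G x μ :=
    RootedK33.isTied_of_forall_isSep hdeg (fun k A B hk hAB hA => hsep k A B hk hAB (.inl hA)) hμ
  suffices h : RootedK33.HasRootedK23 G x from h.exists_isSubdivision hdeg
  obtain hK5 | hK33 := not_and_or.1 hnp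
  · obtain ⟨μ, hμ, hconnected, hdisjoint, hadj⟩ := not_not.1 hK5
    exact RootedK33.hasRootedK23_of_K5 ⟨hconnected, hdisjoint, hadj⟩ (hT hμ) hdeg
  · obtain ⟨μ, hμ, hconnected, hdisjoint, hadj⟩ := not_not.1 hK33
    exact RootedK33.hasRootedK23_of_K33 ⟨hconnected, hdisjoint, hadj⟩ (hT hμ) hdeg
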